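/- There exist μ̂ > 0, c > 0 and γ ≥ 2^{1−n} such that for every 0 < μ ≤ μ̂ the central solution (X^μ, y^μ, S^μ) at ε = 0 satisfies: λ_{[n−i+1]}(S^μ) ≤ n μ / σ and λ_{[i]}(X^μ) ≥ σ / n for i = 1,…,n_B; λ_{[n−i+1]}(X^μ) ≤ n μ / σ and λ_{[i]}(S^μ) ≥ σ / n for i = 1,…,n_N; and μ / (c √n (n μ)^γ) ≤ λ_{[i]}(X^μ) and λ_{[n−i+1]}(S^μ) ≤ c √n (n μ)^γ for i = n_B+1,…,n_B+n_T. -/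

import Mathlib

open Matrix Set

noncomputable section

variable {n m : ℕ}

/-- Feasibility for the primal SDO problem `(P_ε)` (the feasible set does not depend on `ε`). -/
def PrimalFeasible (A : Fin m → Matrix (Fin n) (Fin n) ℝ) (b : Fin m → ℝ)
    (X : Matrix (Fin n) (Fin n) ℝ) : Prop :=
  X.IsSymm ∧ (∀ i, ((A i) * X).trace = b i) ∧ X.PosSemidef

/-- Feasibility for the dual SDO problem `(D_ε)`. -/
def DualFeasible (C Cbar : Matrix (Fin n) (Fin n) ℝ)
    (A : Fin m → Matrix (Fin n) (Fin n) ℝ) (ε : ℝ)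
    (y : Fin m → ℝ) (S : Matrix (Fin n) (Fin n) ℝ) : Prop :=
  S.IsSymm ∧ (∑ i, y i • A i) + S = C + ε • Cbar ∧ S.PosSemidef

/-- The optimal value function `v(ε)` of `(P_ε)`, with values in `EReal`. -/
def vfun (C Cbar : Matrix (Fin n) (Fin n) ℝ) (A : Fin m → Matrix (Fin n) (Fin n) ℝ)
    (b : Fin m → ℝ) (ε : ℝ) : EReal :=
  sInf ((fun X => (((C + ε • Cbar) * X).trace : EReal)) '' {X | PrimalFeasible A b X})

/-- `E = {ε : v(ε) > -∞}`. -/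
def Eset (C Cbar : Matrix (Fin n) (Fin n) ℝ) (A : Fin m → Matrix (Fin n) (Fin n) ℝ)
    (b : Fin m → ℝ) : Set ℝ :=
  {ε | ⊥ < vfun C Cbar A b ε}

/-- The primal optimal set `P*(ε)`. -/
def PrimalOpt (C Cbar : Matrix (Fin n) (Fin n) ℝ) (A : Fin m → Matrix (Fin n) (Fin n) ℝ)
    (b : Fin m → ℝ) (ε : ℝ) : Set (Matrix (Fin n) (Fin n) ℝ) :=
  {X | PrimalFeasible A b X ∧ ∀ X', PrimalFeasible A b X' →
    ((C + ε • Cbar) * X).trace ≤ ((C + ε • Cbar) * X').trace}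

/-- The dual optimal set `D*(ε)`. -/
def DualOpt (C Cbar : Matrix (Fin n) (Fin n) ℝ) (A : Fin m → Matrix (Fin n) (Fin n) ℝ)
    (b : Fin m → ℝ) (ε : ℝ) : Set ((Fin m → ℝ) × Matrix (Fin n) (Fin n) ℝ) :=
  {p | DualFeasible C Cbar A ε p.1 p.2 ∧ ∀ y' S', DualFeasible C Cbar A ε y' S' →
    ∑ i, b i * y' i ≤ ∑ i, b i * p.1 i}

/-- A maximally complementary optimal solution: `X` lies in the relative interior of `P*(ε)`
and `(y, S)` in the relative interior of `D*(ε)`. -/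
def MaxComp (C Cbar : Matrix (Fin n) (Fin n) ℝ) (A : Fin m → Matrix (Fin n) (Fin n) ℝ)
    (b : Fin m → ℝ) (ε : ℝ) (X : Matrix (Fin n) (Fin n) ℝ) (y : Fin m → ℝ)
    (S : Matrix (Fin n) (Fin n) ℝ) : Prop :=
  X ∈ intrinsicInterior ℝ (PrimalOpt C Cbar A b ε) ∧
    (y, S) ∈ intrinsicInterior ℝ (DualOpt C Cbar A b ε)

/-- `π(ε) = π(ε')`: the optimal partitions at `ε` and `ε'` coincide, expressed through
maximally complementary solutions (`B = range X*`, `N = range S*`, `T` being determined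
by `B` and `N`). -/
def SamePartition (C Cbar : Matrix (Fin n) (Fin n) ℝ) (A : Fin m → Matrix (Fin n) (Fin n) ℝ)
    (b : Fin m → ℝ) (ε ε' : ℝ) : Prop :=
  ∃ X y S X' y' S', MaxComp C Cbar A b ε X y S ∧ MaxComp C Cbar A b ε' X' y' S' ∧
    LinearMap.range X.mulVecLin = LinearMap.range X'.mulVecLin ∧
    LinearMap.range S.mulVecLin = LinearMap.range S'.mulVecLin

/-- The standing assumptions: symmetric data, linearly independent constraint matrices and
the interior point condition at `ε = 0`. -/
def StandingAssumptions (C Cbar : Matrix (Fin n) (Fin n) ℝ)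
    (A : Fin m → Matrix (Fin n) (Fin n) ℝ) (b : Fin m → ℝ) : Prop :=
  C.IsSymm ∧ Cbar.IsSymm ∧ (∀ i, (A i).IsSymm) ∧ LinearIndependent ℝ A ∧
    ∃ X y S, PrimalFeasible A b X ∧ X.PosDef ∧ DualFeasible C Cbar A 0 y S ∧ S.PosDef

/-- The invariancy set of `ε̄`. -/
def InvSet (C Cbar : Matrix (Fin n) (Fin n) ℝ) (A : Fin m → Matrix (Fin n) (Fin n) ℝ)
    (b : Fin m → ℝ) (εbar : ℝ) : Set ℝ :=
  {ε | ε ∈ interior (Eset C Cbar A b) ∧ SamePartition C Cbar A b ε εbar}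

/-- `dim B(ε) = dim B(ε')` and `dim N(ε) = dim N(ε')`, expressed through maximally
complementary solutions. -/
def DimsMatch (C Cbar : Matrix (Fin n) (Fin n) ℝ) (A : Fin m → Matrix (Fin n) (Fin n) ℝ)
    (b : Fin m → ℝ) (ε ε' : ℝ) : Prop :=
  ∀ X y S X' y' S', MaxComp C Cbar A b ε X y S → MaxComp C Cbar A b ε' X' y' S' →
    Module.finrank ℝ (LinearMap.range X.mulVecLin) =
        Module.finrank ℝ (LinearMap.range X'.mulVecLin) ∧
      Module.finrank ℝ (LinearMap.range S.mulVecLin) =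
        Module.finrank ℝ (LinearMap.range S'.mulVecLin)

/-- A transition point: a singleton invariancy set such that every neighborhood contains a
parameter at which `dim B` or `dim N` differs. -/
def IsTransitionPoint (C Cbar : Matrix (Fin n) (Fin n) ℝ) (A : Fin m → Matrix (Fin n) (Fin n) ℝ)
    (b : Fin m → ℝ) (εbar : ℝ) : Prop :=
  εbar ∈ interior (Eset C Cbar A b) ∧
    (∀ ε ∈ interior (Eset C Cbar A b), ε ≠ εbar → ¬ SamePartition C Cbar A b ε εbar) ∧
    ∀ ξ : ℝ, 0 < ξ → ∃ ε ∈ Set.Ioo (εbar - ξ) (εbar + ξ) ∩ interior (Eset C Cbar A b),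
      ¬ DimsMatch C Cbar A b ε εbar

/-- Existence of a strictly complementary optimal solution at `ε`. -/
def HasStrictComp (C Cbar : Matrix (Fin n) (Fin n) ℝ) (A : Fin m → Matrix (Fin n) (Fin n) ℝ)
    (b : Fin m → ℝ) (ε : ℝ) : Prop :=
  ∃ X y S, X ∈ PrimalOpt C Cbar A b ε ∧ (y, S) ∈ DualOpt C Cbar A b ε ∧ (X + S).PosDef

/-- Nonsingularity of the Jacobian `J(X, y, S)` of the optimality system, as a linear map on
`S^n × ℝ^m × S^n`: only the trivial symmetric triple is mapped to zero. -/
def JNonsingular (A : Fin m → Matrix (Fin n) (Fin n) ℝ)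
    (X S : Matrix (Fin n) (Fin n) ℝ) : Prop :=
  ∀ (DX DS : Matrix (Fin n) (Fin n) ℝ) (Dy : Fin m → ℝ), DX.IsSymm → DS.IsSymm →
    (∀ i, ((A i) * DX).trace = 0) → ((∑ i, Dy i • A i) + DS = 0) →
    (DX * S + S * DX + X * DS + DS * X = 0) → DX = 0 ∧ Dy = 0 ∧ DS = 0

/-- Primal nondegeneracy of a primal feasible `X`. -/
def PrimalNondeg (A : Fin m → Matrix (Fin n) (Fin n) ℝ)
    (X : Matrix (Fin n) (Fin n) ℝ) : Prop :=
  ∃ (r : ℕ) (M₁ : Matrix (Fin n) (Fin r) ℝ) (M₂ : Matrix (Fin n) (Fin (n - r)) ℝ),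
    M₁ᵀ * M₁ = 1 ∧ M₂ᵀ * M₂ = 1 ∧ M₁ᵀ * M₂ = 0 ∧
    LinearMap.range M₁.mulVecLin = LinearMap.range X.mulVecLin ∧
    LinearIndependent ℝ (fun i =>
      Matrix.fromBlocks (M₁ᵀ * (A i) * M₁) (M₁ᵀ * (A i) * M₂) (M₂ᵀ * (A i) * M₁) 0)

/-- Dual nondegeneracy of a dual feasible `(y, S)` (the condition involves only `S`). -/
def DualNondeg (A : Fin m → Matrix (Fin n) (Fin n) ℝ)
    (S : Matrix (Fin n) (Fin n) ℝ) : Prop :=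
  ∃ (k : ℕ) (N₁ : Matrix (Fin n) (Fin k) ℝ),
    N₁ᵀ * N₁ = 1 ∧ LinearMap.range N₁.mulVecLin = LinearMap.ker S.mulVecLin ∧
    ∀ W : Matrix (Fin k) (Fin k) ℝ, W.IsSymm →
      W ∈ Submodule.span ℝ (Set.range fun i => N₁ᵀ * (A i) * N₁)

/-- A central solution with parameter `μ` for the problems `(P_ε)` and `(D_ε)`. -/
def CentralSol (C Cbar : Matrix (Fin n) (Fin n) ℝ) (A : Fin m → Matrix (Fin n) (Fin n) ℝ)
    (b : Fin m → ℝ) (ε μ : ℝ) (X : Matrix (Fin n) (Fin n) ℝ) (y : Fin m → ℝ)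
    (S : Matrix (Fin n) (Fin n) ℝ) : Prop :=
  PrimalFeasible A b X ∧ DualFeasible C Cbar A ε y S ∧
    X * S = μ • (1 : Matrix (Fin n) (Fin n) ℝ)

/-- The Frobenius norm of a matrix. -/
def frobNorm {α β : Type*} [Fintype α] [Fintype β] (M : Matrix α β ℝ) : ℝ :=
  Real.sqrt (∑ i, ∑ j, (M i j) ^ 2)

/-- The spectral norm (induced 2-norm) of a square matrix. -/
def specNorm {N : ℕ} (M : Matrix (Fin N) (Fin N) ℝ) : ℝ :=
  ‖LinearMap.toContinuousLinearMap (Matrix.toEuclideanLin M)‖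

/-- The smallest eigenvalue of a symmetric matrix, via the Rayleigh quotient. -/
def lamMin {k : ℕ} (M : Matrix (Fin k) (Fin k) ℝ) : ℝ :=
  sInf {r : ℝ | ∃ x : Fin k → ℝ, (∑ i, (x i) ^ 2) = 1 ∧ r = x ⬝ᵥ M.mulVec x}

/-- `θ^μ`: the operator norm of the inverse of the Jacobian `J(X, y, S)` on
`S^n × ℝ^m × S^n`, characterized as the least constant `t ≥ 0` with
`‖(ΔX, Δy, ΔS)‖ ≤ t * ‖J(X,y,S)(ΔX, Δy, ΔS)‖` for all symmetric `ΔX`, `ΔS`. -/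
def thetaMu (A : Fin m → Matrix (Fin n) (Fin n) ℝ)
    (X S : Matrix (Fin n) (Fin n) ℝ) : ℝ :=
  sInf {t : ℝ | 0 ≤ t ∧ ∀ (DX DS : Matrix (Fin n) (Fin n) ℝ) (Dy : Fin m → ℝ),
    DX.IsSymm → DS.IsSymm →
    Real.sqrt (frobNorm DX ^ 2 + (∑ i, (Dy i) ^ 2) + frobNorm DS ^ 2) ≤
      t * Real.sqrt ((∑ i, (((A i) * DX).trace) ^ 2) +
        frobNorm ((∑ i, Dy i • A i) + DS) ^ 2 +
        frobNorm ((1 / 2 : ℝ) • (DX * S + S * DX + X * DS + DS * X)) ^ 2)}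

/-- A nonlinearity interval: a non-singleton open subinterval of `int(E)`, of maximal length,
on which `dim B(·)` and `dim N(·)` are constant while the optimal partition `π(·)` varies. -/
def IsNonlinearityInterval (C Cbar : Matrix (Fin n) (Fin n) ℝ)
    (A : Fin m → Matrix (Fin n) (Fin n) ℝ) (b : Fin m → ℝ) (I : Set ℝ) : Prop :=
  I ⊆ interior (Eset C Cbar A b) ∧ IsOpen I ∧ I.OrdConnected ∧
    (∃ a ∈ I, ∃ c ∈ I, a ≠ c) ∧
    (∀ ε ∈ I, ∀ ε' ∈ I, DimsMatch C Cbar A b ε ε') ∧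
    ¬ (∀ ε ∈ I, ∀ ε' ∈ I, SamePartition C Cbar A b ε ε') ∧
    ∀ I' : Set ℝ, I ⊆ I' → I' ⊆ interior (Eset C Cbar A b) → IsOpen I' → I'.OrdConnected →
      (∀ ε ∈ I', ∀ ε' ∈ I', DimsMatch C Cbar A b ε ε') → I' = I

end

open scoped MatrixOrder Matrix.Norms.L2Operator in
theorem psd_factor {n : ℕ} {S : Matrix (Fin n) (Fin n) ℝ} (hS : S.PosSemidef) :
    ∃ F : Matrix (Fin n) (Fin n) ℝ, S = Fᵀ * F := by
  obtain ⟨F, hF⟩ := (CStarAlgebra.nonneg_iff_eq_star_mul_self (a := S)).1 hS.nonneg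
  exact ⟨F, by simpa [Matrix.star_eq_conjTranspose] using hF⟩

theorem psd_cs {n : ℕ} {S : Matrix (Fin n) (Fin n) ℝ} (hS : S.PosSemidef)
    (F : Matrix (Fin n) (Fin n) ℝ) (i j : Fin n) :
    ((F * S) i j) ^ 2 ≤ ((Fᵀ * F) * S).trace * S j j := by
  obtain ⟨E, rfl⟩ := psd_factor hS
  have h1 : (F * (Eᵀ * E)) i j = ∑ k, (F * Eᵀ) i k * E k j := by
    rw [← Matrix.mul_assoc, Matrix.mul_apply]
  have h2 : (Eᵀ * E) j j = ∑ k, E k j ^ 2 := by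
    rw [Matrix.mul_apply]; exact Finset.sum_congr rfl fun k _ => by simp [sq]
  have h3 : ((Fᵀ * F) * (Eᵀ * E)).trace = ∑ i, ∑ k, ((F * Eᵀ) i k) ^ 2 := by
    have : ((Fᵀ * F) * (Eᵀ * E)).trace = ((F * Eᵀ) * (F * Eᵀ)ᵀ).trace := by
      rw [Matrix.transpose_mul, Matrix.transpose_transpose, Matrix.mul_assoc, Matrix.trace_mul_comm]
      simp only [Matrix.mul_assoc]
    rw [this, Matrix.trace]
    refine Finset.sum_congr rfl fun i _ => ?_
    rw [Matrix.diag_apply, Matrix.mul_apply]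
    exact Finset.sum_congr rfl fun k _ => by simp [sq]
  rw [h1, h2, h3]
  refine (Finset.sum_mul_sq_le_sq_mul_sq _ _ _).trans ?_
  refine mul_le_mul_of_nonneg_right ?_ (Finset.sum_nonneg fun _ _ => sq_nonneg _)
  exact Finset.single_le_sum (f := fun i => ∑ k, ((F * Eᵀ) i k) ^ 2)
    (fun i _ => Finset.sum_nonneg fun _ _ => sq_nonneg _) (Finset.mem_univ i)

theorem psd_trace_mul_nonneg {n : ℕ} {X S : Matrix (Fin n) (Fin n) ℝ} (hX : X.PosSemidef)
    (hS : S.PosSemidef) : 0 ≤ (X * S).trace := by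
  obtain ⟨F, rfl⟩ := psd_factor hX
  rw [Matrix.mul_assoc, Matrix.trace_mul_comm]
  have := (hS.mul_mul_conjTranspose_same F).trace_nonneg
  simpa using this

theorem psd_quad {n : ℕ} {S : Matrix (Fin n) (Fin n) ℝ} (hS : S.PosSemidef) (x : Fin n → ℝ) :
    0 ≤ x ⬝ᵥ S *ᵥ x := by
  simpa using hS.dotProduct_mulVec_nonneg x

theorem psd_of_quad {n : ℕ} {S : Matrix (Fin n) (Fin n) ℝ} (hs : S.IsSymm)
    (h : ∀ x, 0 ≤ x ⬝ᵥ S *ᵥ x) : S.PosSemidef := by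
  refine Matrix.PosSemidef.of_dotProduct_mulVec_nonneg ?_ (by simpa using h)
  have : Sᵀ = S := hs
  simpa [Matrix.IsHermitian] using this

theorem psd_ker {n : ℕ} {S : Matrix (Fin n) (Fin n) ℝ} (hS : S.PosSemidef) {x : Fin n → ℝ}
    (h : x ⬝ᵥ S *ᵥ x = 0) : S *ᵥ x = 0 := by
  have := (hS.dotProduct_mulVec_zero_iff x).1 (by simpa using h)
  exact this

/-- a symmetric idempotent onto the range of a PSD matrix -/
theorem psd_proj {n : ℕ} {G : Matrix (Fin n) (Fin n) ℝ} (hG : G.PosSemidef) :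
    ∃ H R : Matrix (Fin n) (Fin n) ℝ, R = H * G ∧ Rᵀ = R ∧ R * R = R ∧ G * R = G := by
  have hs := hG.1.spectral_theorem
  set U : Matrix (Fin n) (Fin n) ℝ := (hG.1.eigenvectorUnitary : Matrix (Fin n) (Fin n) ℝ) with hU
  set d := hG.1.eigenvalues
  have hUU : Uᵀ * U = 1 := by
    have := Unitary.coe_star_mul_self hG.1.eigenvectorUnitary
    simpa [Matrix.star_eq_conjTranspose] using this
  have hs' : G = U * Matrix.diagonal d * Uᵀ := by
    rw [hs, Unitary.conjStarAlgAut_apply]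
    simp [Matrix.star_eq_conjTranspose, U, d]
  have key : ∀ a b : Fin n → ℝ, (U * Matrix.diagonal a * Uᵀ) * (U * Matrix.diagonal b * Uᵀ)
      = U * Matrix.diagonal (fun i => a i * b i) * Uᵀ := by
    intro a b
    calc _ = U * Matrix.diagonal a * (Uᵀ * U) * Matrix.diagonal b * Uᵀ := by
          simp only [Matrix.mul_assoc]
      _ = _ := by rw [hUU, Matrix.mul_one, Matrix.mul_assoc U, Matrix.diagonal_mul_diagonal]
  refine ⟨U * Matrix.diagonal (fun i => (d i)⁻¹) * Uᵀ,
    U * Matrix.diagonal (fun i => (d i)⁻¹ * d i) * Uᵀ, ?_, ?_, ?_, ?_⟩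
  · rw [hs', key]
  · simp [Matrix.transpose_mul, Matrix.mul_assoc]
  · rw [key]; congr; funext i
    by_cases h : d i = 0 <;> simp [h]
  · rw [hs', key]; congr; funext i
    by_cases h : d i = 0 <;> simp [h]

theorem intrinsic_extend {V : Type*} [AddCommGroup V] [Module ℝ V] [TopologicalSpace V]
    [IsTopologicalAddGroup V] [ContinuousSMul ℝ V] {s : Set V} {x y : V}
    (hx : x ∈ intrinsicInterior ℝ s) (hy : y ∈ s) : ∃ η : ℝ, 0 < η ∧ x + η • (x - y) ∈ s := by
  obtain ⟨z, hz, rfl⟩ := mem_intrinsicInterior.1 hx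
  have hys : y ∈ affineSpan ℝ s := subset_affineSpan ℝ s hy
  have hmem : ∀ η : ℝ, (z : V) + η • ((z : V) - y) ∈ affineSpan ℝ s := by
    intro η
    have := AffineMap.lineMap_mem (Q := affineSpan ℝ s) (-η) z.2 hys
    rw [AffineMap.lineMap_apply] at this
    convert this using 1
    simp only [vsub_eq_sub, vadd_eq_add]
    module
  let f : ℝ → affineSpan ℝ s := fun η => ⟨(z : V) + η • ((z : V) - y), hmem η⟩
  have hf : Continuous f := by
    refine Continuous.subtype_mk ?_ _
    fun_prop
  have h0 : f 0 = z := by ext; simp [f]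
  have hnh : (Subtype.val ⁻¹' s : Set (affineSpan ℝ s)) ∈ nhds (f 0) := by
    rw [h0]; exact mem_interior_iff_mem_nhds.1 hz
  have hev := hf.continuousAt.eventually hnh
  have hev2 : ∀ᶠ η in nhdsWithin (0:ℝ) (Set.Ioi 0), f η ∈ (Subtype.val ⁻¹' s : Set (affineSpan ℝ s)) :=
    hev.filter_mono nhdsWithin_le_nhds
  obtain ⟨η, h1, h2⟩ := (hev2.and self_mem_nhdsWithin).exists
  exact ⟨η, h2, h1⟩

theorem courant {n : ℕ} {S Q : Matrix (Fin n) (Fin n) ℝ} {d : Fin n → ℝ} (hQ : Qᵀ * Q = 1)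
    (hS : S * Q = Q * Matrix.diagonal d) (J : Finset (Fin n)) (a t : ℝ)
    (hJ : ∀ j ∈ J, a ≤ d j) (U : Submodule ℝ (Fin n → ℝ))
    (hU : n < Module.finrank ℝ U + J.card)
    (h : ∀ u ∈ U, u ⬝ᵥ S *ᵥ u ≤ t * (u ⬝ᵥ u)) : a ≤ t := by
  let f : U →ₗ[ℝ] ({k // k ∉ J} → ℝ) :=
    (LinearMap.funLeft ℝ ℝ (Subtype.val : {k // k ∉ J} → Fin n)).comp
      ((Matrix.mulVecLin Qᵀ).comp U.subtype)
  have hker : LinearMap.ker f ≠ ⊥ := by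
    apply LinearMap.ker_ne_bot_of_finrank_lt
    rw [Module.finrank_fintype_fun_eq_card]
    have : Fintype.card {k // k ∉ J} = n - J.card := by
      rw [Fintype.card_subtype_compl]; simp
    have h2 := J.card_le_univ
    rw [Fintype.card_fin] at h2
    omega
  obtain ⟨⟨u, hu⟩, huk, hu0⟩ := (Submodule.ne_bot_iff _).1 hker
  have hu0' : u ≠ 0 := fun h => hu0 (by ext1; exact h)
  have hQQ : Q * Qᵀ = 1 := mul_eq_one_comm.1 hQ
  set c := Qᵀ *ᵥ u with hc
  have hcJ : ∀ k, k ∉ J → c k = 0 := fun k hk => congrFun (LinearMap.mem_ker.1 huk) ⟨k, hk⟩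
  have huc : u = Q *ᵥ c := by rw [hc, Matrix.mulVec_mulVec, hQQ, Matrix.one_mulVec]
  have hdot : ∀ v w, (Q *ᵥ v) ⬝ᵥ (Q *ᵥ w) = v ⬝ᵥ w := by
    intro v w
    rw [Matrix.dotProduct_mulVec, ← Matrix.mulVec_transpose, Matrix.mulVec_mulVec, hQ,
      Matrix.one_mulVec]
  have h1 : u ⬝ᵥ u = ∑ k, c k * c k := by rw [huc, hdot]; rfl
  have h2 : u ⬝ᵥ S *ᵥ u = ∑ k, c k * (d k * c k) := by
    have : S *ᵥ u = Q *ᵥ (Matrix.diagonal d *ᵥ c) := by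
      conv_lhs => rw [huc]
      rw [Matrix.mulVec_mulVec, hS, ← Matrix.mulVec_mulVec]
    rw [this]
    conv_lhs => rw [huc]
    rw [hdot]
    simp [dotProduct, Matrix.mulVec_diagonal]
  have hpos : 0 < u ⬝ᵥ u := by
    have := dotProduct_self_star_pos_iff.2 hu0'
    simpa using this
  have h3 : a * (u ⬝ᵥ u) ≤ u ⬝ᵥ S *ᵥ u := by
    rw [h1, h2, Finset.mul_sum]
    refine Finset.sum_le_sum fun k _ => ?_
    by_cases hk : k ∈ J
    · nlinarith [hJ k hk, mul_self_nonneg (c k)]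
    · simp [hcJ k hk]
  have := h3.trans (h u hu)
  exact le_of_mul_le_mul_right this hpos

theorem quad_bound {n : ℕ} {E : Matrix (Fin n) (Fin n) ℝ} {η : ℝ} (hη : 0 ≤ η)
    (hE : ∀ i j, |E i j| ≤ η) (y : Fin n → ℝ) : |y ⬝ᵥ E *ᵥ y| ≤ η * n * (y ⬝ᵥ y) := by
  have h1 : |y ⬝ᵥ E *ᵥ y| ≤ ∑ i, ∑ j, |y i| * (η * |y j|) := by
    simp only [dotProduct, Matrix.mulVec, Finset.mul_sum]
    refine (Finset.abs_sum_le_sum_abs _ _).trans (Finset.sum_le_sum fun i _ => ?_)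
    refine (Finset.abs_sum_le_sum_abs _ _).trans (Finset.sum_le_sum fun j _ => ?_)
    rw [abs_mul, abs_mul]
    gcongr
    exact hE i j
  have h2 : ∑ i, ∑ j, |y i| * (η * |y j|) = η * (∑ i, |y i|) ^ 2 := by
    rw [sq, Finset.sum_mul_sum, Finset.mul_sum]
    refine Finset.sum_congr rfl fun i _ => ?_
    rw [Finset.mul_sum]
    refine Finset.sum_congr rfl fun j _ => ?_
    ring
  have h3 : (∑ i, |y i|) ^ 2 ≤ n * (y ⬝ᵥ y) := by
    have := sq_sum_le_card_mul_sum_sq (s := Finset.univ) (f := fun i => |y i|)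
    simpa [dotProduct, sq] using this
  rw [h2] at h1
  calc _ ≤ _ := h1
    _ ≤ η * (n * (y ⬝ᵥ y)) := by gcongr
    _ = _ := by ring

theorem dot_self_nonneg' {n : ℕ} (y : Fin n → ℝ) : 0 ≤ y ⬝ᵥ y :=
  Finset.sum_nonneg fun i _ => mul_self_nonneg (y i)

theorem dot_self_pos' {n : ℕ} {y : Fin n → ℝ} (h : y ≠ 0) : 0 < y ⬝ᵥ y := by
  have := dotProduct_self_star_pos_iff.2 h
  simpa using this

theorem coneK_open {n : ℕ} (P : Matrix (Fin n) (Fin n) ℝ) :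
    IsOpen {M : Matrix (Fin n) (Fin n) ℝ | ∃ ε : ℝ, 0 < ε ∧
      ∀ x, ε * ((P *ᵥ x) ⬝ᵥ (P *ᵥ x)) ≤ (P *ᵥ x) ⬝ᵥ M *ᵥ (P *ᵥ x)} := by
  rw [isOpen_iff_mem_nhds]
  rintro M₀ ⟨ε, hε, hM₀⟩
  have hη : 0 < ε / (2 * (n + 1)) := by positivity
  have hev : ∀ᶠ M : Matrix (Fin n) (Fin n) ℝ in nhds M₀, ∀ i j, |M i j - M₀ i j| < ε / (2 * (n + 1)) := by
    rw [Filter.eventually_all]; intro i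
    rw [Filter.eventually_all]; intro j
    have hc : Continuous fun M : Matrix (Fin n) (Fin n) ℝ => |M i j - M₀ i j| := by fun_prop
    refine (hc.tendsto M₀).eventually (gt_mem_nhds ?_)
    simpa using hη
  refine Filter.mem_of_superset hev fun M hM => ⟨ε / 2, by positivity, fun x => ?_⟩
  have h1 := quad_bound (E := M - M₀) hη.le (fun i j => (hM i j).le) (P *ᵥ x)
  rw [Matrix.sub_mulVec, dotProduct_sub] at h1
  have h2 := hM₀ x
  have h3 : ε / (2 * (n + 1)) * n ≤ ε / 2 := by
    rw [div_mul_eq_mul_div, div_le_div_iff₀ (by positivity) (by norm_num)]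
    nlinarith
  have h4 := mul_le_mul_of_nonneg_right h3 (dot_self_nonneg' (P *ᵥ x))
  have h5 := (abs_le.1 h1).1
  linarith

theorem facial {n : ℕ} (P : Matrix (Fin n) (Fin n) ℝ) (hPs : Pᵀ = P)
    (L₀ : Submodule ℝ (Matrix (Fin n) (Fin n) ℝ)) (hsym : ∀ T ∈ L₀, Tᵀ = T)
    (hL : ∀ T ∈ L₀, T.PosSemidef → ¬ ∀ x, P *ᵥ x ≠ 0 → 0 < x ⬝ᵥ T *ᵥ x) :
    ∃ Z : Matrix (Fin n) (Fin n) ℝ, Zᵀ = Z ∧ (∀ T ∈ L₀, (Z * T).trace = 0) ∧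
      (P * Z * P).PosSemidef ∧ P * Z * P ≠ 0 := by
  have : LocallyConvexSpace ℝ (Matrix (Fin n) (Fin n) ℝ) :=
    inferInstanceAs (LocallyConvexSpace ℝ (Fin n → Fin n → ℝ))
  set K := {M : Matrix (Fin n) (Fin n) ℝ | ∃ ε : ℝ, 0 < ε ∧
      ∀ x, ε * ((P *ᵥ x) ⬝ᵥ (P *ᵥ x)) ≤ (P *ᵥ x) ⬝ᵥ M *ᵥ (P *ᵥ x)} with hK
  have hKconv : Convex ℝ K := by
    rintro M ⟨e, he, hM⟩ M' ⟨e', he', hM'⟩ a b ha hb hab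
    refine ⟨a * e + b * e', ?_, fun x => ?_⟩
    · rcases ha.eq_or_lt with h | h
      · have : b = 1 := by linarith
        subst h; subst this; simpa using he'
      · have := mul_pos h he
        have := mul_nonneg hb he'.le
        linarith
    · rw [Matrix.add_mulVec, Matrix.smul_mulVec, Matrix.smul_mulVec, dotProduct_add,
        dotProduct_smul, dotProduct_smul, smul_eq_mul, smul_eq_mul]
      nlinarith [mul_le_mul_of_nonneg_left (hM x) ha, mul_le_mul_of_nonneg_left (hM' x) hb]
  let sy : Matrix (Fin n) (Fin n) ℝ →ₗ[ℝ] Matrix (Fin n) (Fin n) ℝ :=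
    LinearMap.id + (Matrix.transposeLinearEquiv (Fin n) (Fin n) ℝ ℝ).toLinearMap
  have hsy : ∀ M, sy M = M + Mᵀ := fun M => rfl
  let L := L₀.comap sy
  let Φ : Matrix (Fin n) (Fin n) ℝ →ₗ[ℝ] Matrix (Fin n) (Fin n) ℝ :=
    (LinearMap.mulLeft ℝ P).comp (LinearMap.mulRight ℝ P)
  have hΦ : ∀ M, Φ M = P * M * P := fun M => by simp [Φ, Matrix.mul_assoc]
  have hquad : ∀ (M : Matrix (Fin n) (Fin n) ℝ) x, x ⬝ᵥ (P * M * P) *ᵥ x = (P *ᵥ x) ⬝ᵥ M *ᵥ (P *ᵥ x) := by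
    intro M x
    rw [← Matrix.mulVec_mulVec, ← Matrix.mulVec_mulVec, Matrix.dotProduct_mulVec,
      ← Matrix.mulVec_transpose, hPs]
  have hdisj : Disjoint K (L.comap Φ : Set (Matrix (Fin n) (Fin n) ℝ)) := by
    rw [Set.disjoint_left]
    rintro M ⟨ε, hε, hM⟩ hML
    have hT : P * M * P + (P * M * P)ᵀ ∈ L₀ := by
      have : sy (Φ M) ∈ L₀ := hML
      rwa [hsy, hΦ] at this
    have hq : ∀ x, x ⬝ᵥ (P * M * P + (P * M * P)ᵀ) *ᵥ x = 2 * ((P *ᵥ x) ⬝ᵥ M *ᵥ (P *ᵥ x)) := by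
      intro x
      have : x ⬝ᵥ (P * M * P)ᵀ *ᵥ x = x ⬝ᵥ (P * M * P) *ᵥ x := by
        rw [Matrix.mulVec_transpose, dotProduct_comm, ← Matrix.dotProduct_mulVec]
      rw [Matrix.add_mulVec, dotProduct_add, this, hquad]; ring
    refine hL _ hT (psd_of_quad (hsym _ hT) fun x => ?_) fun x hx => ?_
    · rw [hq]
      have := hM x
      have := mul_nonneg hε.le (dot_self_nonneg' (P *ᵥ x))
      linarith
    · rw [hq]
      have := hM x
      have := mul_pos hε (dot_self_pos' hx)
      linarith
  obtain ⟨f, u, hf1, hf2⟩ := geometric_hahn_banach_open hKconv (coneK_open P)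
    (L.comap Φ).convex hdisj
  have hu : u ≤ 0 := by simpa using hf2 0 (Submodule.zero_mem _)
  have hf0 : ∀ M ∈ L.comap Φ, f M = 0 := by
    intro M hM
    by_contra hne
    have := hf2 (((u - 1) / f M) • M) (Submodule.smul_mem _ _ hM)
    rw [map_smul, smul_eq_mul, div_mul_cancel₀ _ hne] at this
    linarith
  have hrange : (-f : Matrix (Fin n) (Fin n) ℝ →L[ℝ] ℝ).toLinearMap ∈ LinearMap.range (L.mkQ.comp Φ).dualMap := by
    rw [LinearMap.range_dualMap_eq_dualAnnihilator_ker, Submodule.mem_dualAnnihilator]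
    intro M hM
    have : M ∈ L.comap Φ := by
      rw [LinearMap.ker_comp, Submodule.ker_mkQ] at hM
      exact hM
    simp [hf0 M this]
  obtain ⟨h, hh⟩ := hrange
  let g : Matrix (Fin n) (Fin n) ℝ →ₗ[ℝ] ℝ := h.comp L.mkQ
  have hgf : ∀ M, g (P * M * P) = - f M := by
    intro M
    have := LinearMap.congr_fun hh M
    simpa [g, hΦ] using this
  have hgL : ∀ M ∈ L, g M = 0 := by
    intro M hM
    have : L.mkQ M = 0 := by simpa using hM
    simp only [g, LinearMap.comp_apply, this, map_zero]
  have hgt : ∀ M, g Mᵀ = g M := by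
    intro M
    have : M - Mᵀ ∈ L := by
      change sy (M - Mᵀ) ∈ L₀
      rw [hsy]; simp
    have := hgL _ this
    rw [map_sub] at this; linarith
  let Z : Matrix (Fin n) (Fin n) ℝ := fun i j => g (Matrix.single i j 1)
  have hZs : Zᵀ = Z := by
    ext i j
    change g (Matrix.single j i 1) = g (Matrix.single i j 1)
    rw [← hgt, Matrix.transpose_single]
  have hgZ : ∀ M, g M = (Z * M).trace := by
    intro M
    conv_lhs => rw [Matrix.matrix_eq_sum_single M]
    rw [map_sum, ← hZs, Matrix.trace_mul_comm, Matrix.trace]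
    refine Finset.sum_congr rfl fun i _ => ?_
    rw [map_sum, Matrix.diag_apply, Matrix.mul_apply]
    refine Finset.sum_congr rfl fun j _ => ?_
    have : Matrix.single i j (M i j) = M i j • Matrix.single i j (1:ℝ) := by simp
    rw [this, map_smul]; rfl
  have hone : (1 : Matrix (Fin n) (Fin n) ℝ) ∈ K := ⟨1, one_pos, fun x => by simp⟩
  have hf_one : f 1 < 0 := (hf1 _ hone).trans_le hu
  have hpsd : ∀ M : Matrix (Fin n) (Fin n) ℝ, M.PosSemidef → f M ≤ 0 := by
    intro M hM
    by_contra! hpos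
    have hmem : M + (f M / (- f 1)) • (1 : Matrix (Fin n) (Fin n) ℝ) ∈ K := by
      refine ⟨f M / (- f 1), div_pos hpos (by linarith), fun x => ?_⟩
      rw [Matrix.add_mulVec, dotProduct_add, Matrix.smul_mulVec, Matrix.one_mulVec, dotProduct_smul,
        smul_eq_mul]
      have := psd_quad hM (P *ᵥ x)
      linarith
    have h2 := (hf1 _ hmem).trans_le hu
    rw [map_add, map_smul, smul_eq_mul, div_mul_eq_mul_div, mul_div_assoc] at h2
    have : f 1 / -f 1 = -1 := by rw [div_neg, div_self hf_one.ne]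
    rw [this] at h2; linarith
  have htr : ∀ M, (P * Z * P * M).trace = - f M := by
    intro M
    rw [← hgf, hgZ, Matrix.mul_assoc, Matrix.mul_assoc, Matrix.trace_mul_comm]
    simp only [Matrix.mul_assoc]
  refine ⟨Z, hZs, ?_, ?_, ?_⟩
  · intro T hT
    rw [← hgZ]
    apply hgL
    change sy T ∈ L₀
    rw [hsy, hsym T hT]
    exact L₀.add_mem hT hT
  · refine psd_of_quad ?_ fun x => ?_
    · change (P * Z * P)ᵀ = _
      simp only [Matrix.transpose_mul, hPs, hZs, Matrix.mul_assoc]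
    · have h1 := htr (Matrix.vecMulVec x x)
      have h2 := hpsd (Matrix.vecMulVec x x) (by simpa using Matrix.posSemidef_vecMulVec_self_star x)
      rw [Matrix.mul_vecMulVec, Matrix.trace_vecMulVec] at h1
      rw [dotProduct_comm, h1]; linarith
  · intro h0
    have := htr 1
    rw [h0] at this
    simp at this
    linarith

theorem bigO_entry_mul {α : Type*} {n : ℕ} {l : Filter α} {f : α → Matrix (Fin n) (Fin n) ℝ}
    {g : α → ℝ} (B D : Matrix (Fin n) (Fin n) ℝ)
    (h : ∀ i j, Asymptotics.IsBigO l (fun p => f p i j) g) (i j : Fin n) :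
    Asymptotics.IsBigO l (fun p => (B * f p * D) i j) g := by
  simp only [Matrix.mul_apply, Finset.sum_mul]
  apply Asymptotics.IsBigO.fun_sum
  intro k _
  apply Asymptotics.IsBigO.fun_sum
  intro k' _
  have := ((h k' k).const_mul_left (B i k')).const_mul_left (D k j)
  refine this.congr_left fun p => by ring

theorem facial_step {n m : ℕ} (Ss : Matrix (Fin n) (Fin n) ℝ)
    (A : Fin m → Matrix (Fin n) (Fin n) ℝ) (b : Fin m → ℝ) (hA : ∀ i, (A i)ᵀ = A i)
    (hSs : Ss.PosSemidef)
    (hmax : ∀ (t : ℝ) (y : Fin m → ℝ), ∑ i, b i * y i = 0 →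
      (t • Ss + ∑ i, y i • A i).PosSemidef → ∀ v, Ss *ᵥ v = 0 →
        v ⬝ᵥ (t • Ss + ∑ i, y i • A i) *ᵥ v = 0)
    (T : Set (ℝ × Matrix (Fin n) (Fin n) ℝ))
    (hT : ∀ p ∈ T, 0 < p.1 ∧ p.1 ≤ 1 ∧ p.2.PosSemidef ∧
      ∃ y : Fin m → ℝ, p.2 = Ss + ∑ i, y i • A i ∧ |∑ i, b i * y i| ≤ n * p.1)
    (hbd : ∀ j, Asymptotics.IsBigO (Filter.principal T) (fun p => p.2 j j) (fun _ => (1 : ℝ)))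
    (P : Matrix (Fin n) (Fin n) ℝ) (θ : ℝ) (hθ : θ ≤ 1) (hθ0 : 0 < θ)
    (hPs : Pᵀ = P) (hPP : P * P = P) (hPS : P * Ss = Ss)
    (hO : ∀ i k, Asymptotics.IsBigO (Filter.principal T) (fun p => (p.2 - P * p.2 * P) i k)
      (fun p => p.1 ^ θ))
    (hnot : ¬ ∀ v, Ss *ᵥ v = 0 → P *ᵥ v = 0) :
    ∃ P' : Matrix (Fin n) (Fin n) ℝ, P'ᵀ = P' ∧ P' * P' = P' ∧ P' * Ss = Ss ∧
      P'.rank < P.rank ∧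
      ∀ i k, Asymptotics.IsBigO (Filter.principal T) (fun p => (p.2 - P' * p.2 * P') i k)
        (fun p => p.1 ^ (θ / 2)) := by
  have hSsT : Ssᵀ = Ss := by simpa [Matrix.IsHermitian] using hSs.1
  let L₀ : Submodule ℝ (Matrix (Fin n) (Fin n) ℝ) :=
    { carrier := {M | ∃ (t : ℝ) (y : Fin m → ℝ), ∑ i, b i * y i = 0 ∧
        M = t • Ss + ∑ i, y i • A i}
      add_mem' := by
        rintro _ _ ⟨t, y, hy, rfl⟩ ⟨t', y', hy', rfl⟩
        refine ⟨t + t', y + y', ?_, ?_⟩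
        · simp [mul_add, Finset.sum_add_distrib, hy, hy']
        · simp only [Pi.add_apply, add_smul, Finset.sum_add_distrib]; abel
      zero_mem' := ⟨0, 0, by simp, by simp⟩
      smul_mem' := by
        rintro c _ ⟨t, y, hy, rfl⟩
        refine ⟨c * t, c • y, ?_, ?_⟩
        · have : ∑ i, b i * (c • y) i = c * ∑ i, b i * y i := by
            rw [Finset.mul_sum]; refine Finset.sum_congr rfl fun i _ => ?_
            simp; ring
          rw [this, hy, mul_zero]
        · simp only [Pi.smul_apply, smul_add, Finset.smul_sum, smul_smul, smul_eq_mul] }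
  obtain ⟨Z, hZs, hZ0, hG, hG0⟩ := facial P hPs L₀ (by
      rintro _ ⟨t, y, hy, rfl⟩
      simp [Matrix.transpose_sum, hSsT, hA]) (by
      rintro _ ⟨t, y, hy, rfl⟩ hpsd hpos
      push Not at hnot
      obtain ⟨v, hv, hPv⟩ := hnot
      have := hpos v hPv
      rw [hmax t y hy hpsd v hv] at this
      exact lt_irrefl _ this)
  set G := P * Z * P with hGdef
  have htrG : ∀ M, (G * M).trace = (Z * (P * M * P)).trace := by
    intro M
    rw [hGdef, Matrix.mul_assoc, Matrix.mul_assoc, Matrix.trace_mul_comm]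
    simp only [Matrix.mul_assoc]
  obtain ⟨F, hF⟩ := psd_factor hG
  obtain ⟨H, R, hR, hRs, hRR, hGR⟩ := psd_proj hG
  have hGs : Gᵀ = G := by rw [hF]; simp
  have hPG : P * G = G := by rw [hGdef, ← Matrix.mul_assoc, ← Matrix.mul_assoc, hPP]
  have hPR : P * R = R := by
    rw [← hRs, hR, Matrix.transpose_mul, hGs, ← Matrix.mul_assoc, hPG]
  have hRP : R * P = R := by
    have := congrArg Matrix.transpose hPR
    rwa [Matrix.transpose_mul, hRs, hPs] at this
  have hR0 : R ≠ 0 := by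
    rintro h
    rw [h, Matrix.mul_zero] at hGR
    exact hG0 hGR.symm
  have hSsP : Ss * P = Ss := by
    have := congrArg Matrix.transpose hPS
    rwa [Matrix.transpose_mul, hSsT, hPs] at this
  have hGSs : G * Ss = 0 := by
    have h0 : ((Fᵀ * F) * Ss).trace = 0 := by
      rw [← hF, htrG, hPS, hSsP]
      exact hZ0 _ ⟨1, 0, by simp, by simp⟩
    have : F * Ss = 0 := by
      ext i j
      have := psd_cs hSs F i j
      rw [h0, zero_mul] at this
      exact pow_eq_zero_iff (two_ne_zero) |>.1 (le_antisymm this (sq_nonneg _))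
    rw [hF, Matrix.mul_assoc, this, Matrix.mul_zero]
  -- κ
  obtain ⟨κ, hκ⟩ : ∃ κ : ℝ, ∀ y : Fin m → ℝ, (Z * ∑ i, y i • A i).trace = κ * ∑ i, b i * y i := by
    by_cases hb : ∃ y₀ : Fin m → ℝ, ∑ i, b i * y₀ i ≠ 0
    · obtain ⟨y₀, hy₀⟩ := hb
      refine ⟨(Z * ∑ i, y₀ i • A i).trace / ∑ i, b i * y₀ i, fun y => ?_⟩
      set s := ∑ i, b i * y i
      set s₀ := ∑ i, b i * y₀ i
      have h1 := hZ0 (∑ i, (y i - s / s₀ * y₀ i) • A i) ⟨0, fun i => y i - s / s₀ * y₀ i, by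
        have : ∑ i, b i * (y i - s / s₀ * y₀ i) = s - s / s₀ * s₀ := by
          simp only [mul_sub, Finset.sum_sub_distrib, s₀, Finset.mul_sum]
          congr 1
          refine Finset.sum_congr rfl fun i _ => by ring
        rw [this, div_mul_cancel₀ _ hy₀, sub_self], by simp⟩
      have h2 : ∑ i, (y i - s / s₀ * y₀ i) • A i
          = ∑ i, y i • A i - (s / s₀) • ∑ i, y₀ i • A i := by
        simp only [sub_smul, Finset.sum_sub_distrib, Finset.smul_sum, smul_smul]
      rw [h2, Matrix.mul_sub, Matrix.trace_sub, Matrix.mul_smul, Matrix.trace_smul, smul_eq_mul] at h1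
      have h3 : (Z * ∑ i, y i • A i).trace = s / s₀ * (Z * ∑ i, y₀ i • A i).trace := by linarith
      rw [h3]; ring
    · push Not at hb
      refine ⟨0, fun y => ?_⟩
      rw [zero_mul]
      exact hZ0 _ ⟨0, y, hb y, by simp⟩
  have hpow : ∀ {a c : ℝ}, c ≤ a → Asymptotics.IsBigO (Filter.principal T)
      (fun p => p.1 ^ a) (fun p => p.1 ^ c) := by
    intro a c hac
    rw [Asymptotics.isBigO_principal]
    refine ⟨1, fun p hp => ?_⟩
    obtain ⟨h0, h1, -⟩ := hT p hp
    rw [one_mul, Real.norm_of_nonneg (by positivity), Real.norm_of_nonneg (by positivity)]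
    exact Real.rpow_le_rpow_of_exponent_ge h0 h1 hac
  -- trace estimate
  have htrO : Asymptotics.IsBigO (Filter.principal T) (fun p => (G * p.2).trace)
      (fun p => p.1 ^ θ) := by
    have h1 : Asymptotics.IsBigO (Filter.principal T) (fun p => (Z * p.2).trace)
        (fun p => p.1 ^ θ) := by
      refine Asymptotics.IsBigO.trans (g := fun p : ℝ × Matrix (Fin n) (Fin n) ℝ => p.1 ^ (1:ℝ)) ?_ (hpow hθ)
      rw [Asymptotics.isBigO_principal]
      refine ⟨|κ| * n, fun p hp => ?_⟩
      obtain ⟨h0, h1, -, y, hy, hby⟩ := hT p hp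
      have : (Z * p.2).trace = κ * ∑ i, b i * y i := by
        rw [hy, Matrix.mul_add, Matrix.trace_add, hκ]
        have := hZ0 Ss ⟨1, 0, by simp, by simp⟩
        rw [this, zero_add]
      rw [this, Real.norm_eq_abs, abs_mul, Real.rpow_one, Real.norm_of_nonneg h0.le, mul_assoc]
      gcongr
    have h2 : Asymptotics.IsBigO (Filter.principal T) (fun p => (Z * (p.2 - P * p.2 * P)).trace)
        (fun p => p.1 ^ θ) := by
      simp only [Matrix.trace, Matrix.diag_apply]
      apply Asymptotics.IsBigO.fun_sum
      intro i _
      have := bigO_entry_mul Z 1 hO i i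
      simpa using this
    refine (h1.sub h2).congr_left fun p => ?_
    rw [htrG, Matrix.mul_sub, Matrix.trace_sub]; ring
  have hFO : ∀ i j, Asymptotics.IsBigO (Filter.principal T) (fun p => (F * p.2) i j)
      (fun p => p.1 ^ (θ / 2)) := by
    intro i j
    refine Asymptotics.IsBigO.of_pow (n := 2) two_ne_zero ?_
    have h1 := htrO.mul (hbd j)
    refine Asymptotics.IsBigO.trans ?_ (h1.trans ?_)
    · rw [Asymptotics.isBigO_principal]
      refine ⟨1, fun p hp => ?_⟩
      obtain ⟨h0, _, hps, -⟩ := hT p hp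
      have := psd_cs hps F i j
      rw [← hF] at this
      rw [one_mul, Pi.pow_apply, Real.norm_of_nonneg (sq_nonneg _)]
      exact this.trans (le_abs_self _)
    · rw [Asymptotics.isBigO_principal]
      refine ⟨1, fun p hp => ?_⟩
      obtain ⟨h0, _, hps, -⟩ := hT p hp
      rw [one_mul, mul_one, Pi.pow_apply, ← Real.rpow_mul_natCast h0.le]
      simp
  have hRO : ∀ i j, Asymptotics.IsBigO (Filter.principal T) (fun p => (R * p.2) i j)
      (fun p => p.1 ^ (θ / 2)) := by
    intro i j
    have := bigO_entry_mul (H * Fᵀ) 1 hFO i j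
    refine this.congr_left fun p => ?_
    rw [Matrix.mul_one, hR, hF]
    simp only [Matrix.mul_assoc]
  have hRO' : ∀ i j, Asymptotics.IsBigO (Filter.principal T) (fun p => (p.2 * R) i j)
      (fun p => p.1 ^ (θ / 2)) := by
    intro i j
    refine (hRO j i).congr' ?_ Filter.EventuallyEq.rfl
    refine Filter.eventually_principal.2 fun p hp => ?_
    obtain ⟨h0, _, hps, -⟩ := hT p hp
    have hpT : (p.2)ᵀ = p.2 := by simpa [Matrix.IsHermitian] using hps.1
    have : p.2 * R = (R * p.2)ᵀ := by rw [Matrix.transpose_mul, hRs, hpT]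
    change _ = (p.2 * R) i j
    rw [this, Matrix.transpose_apply]
  have hP'P' : (P - R) * (P - R) = P - R := by
    rw [Matrix.sub_mul, Matrix.mul_sub, Matrix.mul_sub, hPP, hPR, hRP, hRR]; abel
  refine ⟨P - R, ?_, hP'P', ?_, ?_, ?_⟩
  · rw [Matrix.transpose_sub, hPs, hRs]
  · rw [Matrix.sub_mul, hPS, hR, Matrix.mul_assoc, hGSs, Matrix.mul_zero, sub_zero]
  · refine Submodule.finrank_lt_finrank_of_lt (lt_of_le_of_ne ?_ ?_)
    · rintro _ ⟨x, rfl⟩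
      refine ⟨(P - R) *ᵥ x, ?_⟩
      simp only [Matrix.mulVecLin_apply]
      rw [Matrix.mulVec_mulVec, Matrix.mul_sub, hPP, hPR]
    · intro heq
      apply hR0
      refine Matrix.ext_of_mulVec_single fun i => ?_
      have hmem : R *ᵥ Pi.single i 1 ∈ LinearMap.range (P - R).mulVecLin := by
        rw [heq]
        exact ⟨R *ᵥ Pi.single i 1, by simp only [Matrix.mulVecLin_apply, Matrix.mulVec_mulVec, hPR]⟩
      obtain ⟨x, hx⟩ := hmem
      simp only [Matrix.mulVecLin_apply] at hx
      have h1 : (P - R) *ᵥ ((P - R) *ᵥ x) = (P - R) *ᵥ x := by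
        rw [Matrix.mulVec_mulVec, hP'P']
      rw [hx, Matrix.mulVec_mulVec, Matrix.sub_mul, hPR, hRR, sub_self, Matrix.zero_mulVec] at h1
      rw [← h1, Matrix.zero_mulVec]
  · intro i k
    have h1 := (hO i k).trans (hpow (show θ / 2 ≤ θ by linarith))
    have h2 := bigO_entry_mul 1 P hRO i k
    have h3 := bigO_entry_mul (P - R) 1 hRO' i k
    refine ((h1.add h2).add h3).congr_left fun p => ?_
    rw [← Matrix.add_apply, ← Matrix.add_apply]
    refine congrFun (congrFun ?_ i) k
    simp only [Matrix.mul_one, Matrix.one_mul, Matrix.sub_mul, Matrix.mul_sub, Matrix.mul_assoc]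
    abel

theorem facial_iter {n m : ℕ} (Ss : Matrix (Fin n) (Fin n) ℝ)
    (A : Fin m → Matrix (Fin n) (Fin n) ℝ) (b : Fin m → ℝ) (hA : ∀ i, (A i)ᵀ = A i)
    (hSs : Ss.PosSemidef) (hSs0 : Ss ≠ 0)
    (hmax : ∀ (t : ℝ) (y : Fin m → ℝ), ∑ i, b i * y i = 0 →
      (t • Ss + ∑ i, y i • A i).PosSemidef → ∀ v, Ss *ᵥ v = 0 →
        v ⬝ᵥ (t • Ss + ∑ i, y i • A i) *ᵥ v = 0)
    (T : Set (ℝ × Matrix (Fin n) (Fin n) ℝ))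
    (hT : ∀ p ∈ T, 0 < p.1 ∧ p.1 ≤ 1 ∧ p.2.PosSemidef ∧
      ∃ y : Fin m → ℝ, p.2 = Ss + ∑ i, y i • A i ∧ |∑ i, b i * y i| ≤ n * p.1)
    (hbd : ∀ j, Asymptotics.IsBigO (Filter.principal T) (fun p => p.2 j j) (fun _ => (1 : ℝ)))
    (j : ℕ) : ∀ (P : Matrix (Fin n) (Fin n) ℝ) (θ : ℝ) (_ : θ ≤ 1) (_ : 0 < θ)
    (_ : Pᵀ = P) (_ : P * P = P) (_ : P * Ss = Ss) (_ : P.rank ≤ 1 + j)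
    (_ : ∀ i k, Asymptotics.IsBigO (Filter.principal T) (fun p => (p.2 - P * p.2 * P) i k)
      (fun p => p.1 ^ θ)),
    ∃ P' : Matrix (Fin n) (Fin n) ℝ, P'ᵀ = P' ∧ (∀ v, Ss *ᵥ v = 0 → P' *ᵥ v = 0) ∧
      ∀ i k, Asymptotics.IsBigO (Filter.principal T) (fun p => (p.2 - P' * p.2 * P') i k)
        (fun p => p.1 ^ (θ / 2 ^ j)) := by
  induction j with
  | zero =>
    intro P θ hθ hθ0 hPs hPP hPS hr hO
    by_cases hd : ∀ v, Ss *ᵥ v = 0 → P *ᵥ v = 0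
    · exact ⟨P, hPs, hd, by simpa using hO⟩
    · obtain ⟨P', -, -, h3, h4, -⟩ := facial_step Ss A b hA hSs hmax T hT hbd P θ hθ hθ0 hPs hPP hPS
        hO hd
      exfalso
      have : P'.rank = 0 := by omega
      have hz : P' = 0 := by
        have h0 : LinearMap.range P'.mulVecLin = ⊥ := Submodule.finrank_eq_zero.1 this
        rw [LinearMap.range_eq_bot] at h0
        refine Matrix.ext_of_mulVec_single fun i => ?_
        have := LinearMap.congr_fun h0 (Pi.single i 1)
        rw [Matrix.zero_mulVec]
        exact this
      rw [hz, Matrix.zero_mul] at h3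
      exact hSs0 h3.symm
  | succ j ih =>
    intro P θ hθ hθ0 hPs hPP hPS hr hO
    by_cases hd : ∀ v, Ss *ᵥ v = 0 → P *ᵥ v = 0
    · refine ⟨P, hPs, hd, fun i k => (hO i k).trans ?_⟩
      rw [Asymptotics.isBigO_principal]
      refine ⟨1, fun p hp => ?_⟩
      obtain ⟨h0, h1, -⟩ := hT p hp
      rw [one_mul, Real.norm_of_nonneg (by positivity), Real.norm_of_nonneg (by positivity)]
      refine Real.rpow_le_rpow_of_exponent_ge h0 h1 ?_
      exact div_le_self hθ0.le (one_le_pow₀ (by norm_num))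
    · obtain ⟨P', h1, h2, h3, h4, h5⟩ := facial_step Ss A b hA hSs hmax T hT hbd P θ hθ hθ0 hPs hPP
        hPS hO hd
      have := ih P' (θ / 2) (by linarith) (by linarith) h1 h2 h3 (by omega) h5
      rw [div_div, ← pow_succ'] at this
      exact this

theorem psd_transpose {k : ℕ} {M : Matrix (Fin k) (Fin k) ℝ} (h : M.PosSemidef) : Mᵀ = M := by
  simpa [Matrix.IsHermitian] using h.1

theorem pd_lower {k : ℕ} {M : Matrix (Fin k) (Fin k) ℝ} (h : ∀ z, z ≠ 0 → 0 < z ⬝ᵥ M *ᵥ z) :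
    ∃ ε : ℝ, 0 < ε ∧ ∀ z, ε * (z ⬝ᵥ z) ≤ z ⬝ᵥ M *ᵥ z := by
  rcases Nat.eq_zero_or_pos k with rfl | hk
  · exact ⟨1, one_pos, fun z => by simp [dotProduct]⟩
  have hcl : IsClosed {x : Fin k → ℝ | x ⬝ᵥ x = 1} :=
    isClosed_eq (by unfold dotProduct; fun_prop) continuous_const
  have hbd : Bornology.IsBounded {x : Fin k → ℝ | x ⬝ᵥ x = 1} := by
    refine (Metric.isBounded_closedBall (x := (0 : Fin k → ℝ)) (r := 1)).subset fun x hx => ?_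
    rw [mem_closedBall_zero_iff, pi_norm_le_iff_of_nonneg zero_le_one]
    intro i
    have h1 : x i * x i ≤ x ⬝ᵥ x := Finset.single_le_sum (f := fun i => x i * x i)
      (fun i _ => mul_self_nonneg _) (Finset.mem_univ i)
    have hx' : x ⬝ᵥ x = 1 := hx
    rw [Real.norm_eq_abs]
    exact abs_le_one_iff_mul_self_le_one.2 (by linarith)
  have hcomp : IsCompact {x : Fin k → ℝ | x ⬝ᵥ x = 1} := Metric.isCompact_of_isClosed_isBounded hcl hbd
  have hne : {x : Fin k → ℝ | x ⬝ᵥ x = 1}.Nonempty := ⟨Pi.single ⟨0, hk⟩ 1, by simp⟩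
  obtain ⟨x₀, hx₀, hmin⟩ := hcomp.exists_isMinOn hne (f := fun z => z ⬝ᵥ M *ᵥ z)
    (by unfold dotProduct Matrix.mulVec dotProduct; fun_prop)
  refine ⟨x₀ ⬝ᵥ M *ᵥ x₀, h x₀ ?_, fun z => ?_⟩
  · rintro rfl
    simp at hx₀
  · by_cases hz : z = 0
    · simp [hz]
    have hpos := dot_self_pos' hz
    set s := Real.sqrt (z ⬝ᵥ z) with hs
    have hs0 : 0 < s := Real.sqrt_pos.2 hpos
    have hss : s * s = z ⬝ᵥ z := Real.mul_self_sqrt hpos.le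
    have hmem : (s⁻¹ • z) ⬝ᵥ (s⁻¹ • z) = 1 := by
      rw [smul_dotProduct, dotProduct_smul, ← hss, smul_eq_mul, smul_eq_mul]
      field_simp
    have := hmin hmem
    simp only [mem_setOf_eq] at this
    rw [Matrix.mulVec_smul, smul_dotProduct, dotProduct_smul, smul_eq_mul, smul_eq_mul] at this
    rw [← hss]
    calc _ ≤ (s⁻¹ * (s⁻¹ * (z ⬝ᵥ M *ᵥ z))) * (s * s) := by gcongr
      _ = _ := by field_simp

theorem psd_le_trace {k : ℕ} {M : Matrix (Fin k) (Fin k) ℝ} (hM : M.PosSemidef) (z : Fin k → ℝ) :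
    z ⬝ᵥ M *ᵥ z ≤ M.trace * (z ⬝ᵥ z) := by
  obtain ⟨E, rfl⟩ := psd_factor hM
  have h1 : z ⬝ᵥ (Eᵀ * E) *ᵥ z = ∑ i, (∑ j, E i j * z j) ^ 2 := by
    rw [← Matrix.mulVec_mulVec, Matrix.dotProduct_mulVec, ← Matrix.mulVec_transpose,
      Matrix.transpose_transpose]
    simp [dotProduct, Matrix.mulVec, sq]
  have h2 : (Eᵀ * E).trace = ∑ i, ∑ j, E i j ^ 2 := by
    rw [Matrix.trace_mul_comm]
    simp [Matrix.trace, Matrix.mul_apply, sq]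
  rw [h1, h2, Finset.sum_mul]
  refine Finset.sum_le_sum fun i _ => ?_
  refine (Finset.sum_mul_sq_le_sq_mul_sq _ _ _).trans (le_of_eq ?_)
  simp [dotProduct, sq]

theorem trace_lower {k : ℕ} {M S : Matrix (Fin k) (Fin k) ℝ} (hM : Mᵀ = M) (hS : S.PosSemidef)
    (ε : ℝ) (h : ∀ z, ε * (z ⬝ᵥ z) ≤ z ⬝ᵥ M *ᵥ z) : ε * S.trace ≤ (S * M).trace := by
  have hp : (M - ε • (1 : Matrix (Fin k) (Fin k) ℝ)).PosSemidef := by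
    refine psd_of_quad ?_ fun x => ?_
    · change _ᵀ = _
      simp [hM]
    · rw [Matrix.sub_mulVec, dotProduct_sub, Matrix.smul_mulVec, Matrix.one_mulVec, dotProduct_smul,
        smul_eq_mul]
      linarith [h x]
  have := psd_trace_mul_nonneg hS hp
  rw [Matrix.mul_sub, Matrix.trace_sub, Matrix.mul_smul, Matrix.mul_one, Matrix.trace_smul,
    smul_eq_mul] at this
  linarith

theorem sum_sq_eq_dot {k : ℕ} (x : Fin k → ℝ) : ∑ i, (x i) ^ 2 = x ⬝ᵥ x := by
  simp [dotProduct, sq]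

theorem lamMin_lower {k : ℕ} {M : Matrix (Fin k) (Fin k) ℝ} (hM : M.PosSemidef) (z : Fin k → ℝ) :
    lamMin M * (z ⬝ᵥ z) ≤ z ⬝ᵥ M *ᵥ z := by
  by_cases hz : z = 0
  · simp [hz]
  have hpos := dot_self_pos' hz
  set s := Real.sqrt (z ⬝ᵥ z) with hs
  have hs0 : 0 < s := Real.sqrt_pos.2 hpos
  have hss : s * s = z ⬝ᵥ z := Real.mul_self_sqrt hpos.le
  have hmem : (s⁻¹ • z) ⬝ᵥ (s⁻¹ • z) = 1 := by
    rw [smul_dotProduct, dotProduct_smul, ← hss, smul_eq_mul, smul_eq_mul]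
    field_simp
  have : lamMin M ≤ (s⁻¹ • z) ⬝ᵥ M *ᵥ (s⁻¹ • z) := by
    refine csInf_le ⟨0, ?_⟩ ⟨s⁻¹ • z, by rw [sum_sq_eq_dot, hmem], rfl⟩
    rintro _ ⟨x, _, rfl⟩
    exact psd_quad hM x
  rw [Matrix.mulVec_smul, smul_dotProduct, dotProduct_smul, smul_eq_mul, smul_eq_mul] at this
  rw [← hss]
  calc _ ≤ (s⁻¹ * (s⁻¹ * (z ⬝ᵥ M *ᵥ z))) * (s * s) := by gcongr
    _ = _ := by field_simp

theorem lamMin_pos {k : ℕ} (hk : 0 < k) {M : Matrix (Fin k) (Fin k) ℝ}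
    (h : ∀ z, z ≠ 0 → 0 < z ⬝ᵥ M *ᵥ z) : 0 < lamMin M := by
  obtain ⟨ε, hε, hM⟩ := pd_lower h
  refine hε.trans_le (le_csInf ⟨_, Pi.single ⟨0, hk⟩ 1, ?_, rfl⟩ ?_)
  · rw [sum_sq_eq_dot]; simp
  · rintro _ ⟨x, hx, rfl⟩
    rw [sum_sq_eq_dot] at hx
    simpa [hx] using hM x

theorem sig_bound {n k : ℕ} (hk : 0 < k) (Q : Matrix (Fin n) (Fin k) ℝ) (hQ : Qᵀ * Q = 1)
    (𝒳 : Set (Matrix (Fin n) (Fin n) ℝ)) (X₀ : Matrix (Fin n) (Fin n) ℝ) (hX₀ : X₀ ∈ 𝒳)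
    (hpsd : ∀ X ∈ 𝒳, X.PosSemidef) (hker : ∀ X ∈ 𝒳, ∀ v, X₀ *ᵥ v = 0 → X *ᵥ v = 0)
    (hrange : LinearMap.range Q.mulVecLin = LinearMap.range X₀.mulVecLin)
    (S : Matrix (Fin n) (Fin n) ℝ) (hS : S.PosSemidef) (hSpos : ∀ z, z ≠ 0 → 0 < z ⬝ᵥ S *ᵥ z)
    (τ σ' : ℝ) (hτ : ∀ X ∈ 𝒳, (S * X).trace ≤ τ)
    (hσ : σ' = sSup ((fun X => lamMin (Qᵀ * X * Q)) '' 𝒳)) :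
    0 < σ' ∧ ∀ u ∈ LinearMap.range Q.mulVecLin, u ⬝ᵥ S *ᵥ u ≤ τ / σ' * (u ⬝ᵥ u) := by
  have hsymm : ∀ X : Matrix (Fin n) (Fin n) ℝ, X.PosSemidef → Xᵀ = X := fun X h => psd_transpose h
  have hquad : ∀ (X : Matrix (Fin n) (Fin n) ℝ) z,
      z ⬝ᵥ (Qᵀ * X * Q) *ᵥ z = (Q *ᵥ z) ⬝ᵥ X *ᵥ (Q *ᵥ z) := by
    intro X z
    rw [← Matrix.mulVec_mulVec, ← Matrix.mulVec_mulVec, Matrix.dotProduct_mulVec,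
      ← Matrix.mulVec_transpose, Matrix.transpose_transpose]
  have hQQ : ∀ z, (Q *ᵥ z) ⬝ᵥ (Q *ᵥ z) = z ⬝ᵥ z := by
    intro z
    have := hquad 1 z
    rw [Matrix.mul_one, hQ, Matrix.one_mulVec, Matrix.one_mulVec] at this
    exact this.symm
  have hQne : ∀ z, z ≠ 0 → Q *ᵥ z ≠ 0 := by
    intro z hz h0
    have := hQQ z
    rw [h0, zero_dotProduct] at this
    exact (dot_self_pos' hz).ne this
  have hcompr : ∀ X : Matrix (Fin n) (Fin n) ℝ, X.PosSemidef → (Qᵀ * X * Q).PosSemidef := by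
    intro X hX
    simpa using hX.conjTranspose_mul_mul_same Q
  -- projection identities
  have hX₀Q : X₀ * (Q * Qᵀ) = X₀ := by
    have h1 : Q * Qᵀ * X₀ = X₀ := by
      refine Matrix.ext_of_mulVec_single fun i => ?_
      have : X₀ *ᵥ Pi.single i 1 ∈ LinearMap.range Q.mulVecLin := by
        rw [hrange]; exact ⟨_, rfl⟩
      obtain ⟨z, hz⟩ := this
      rw [Matrix.mulVecLin_apply] at hz
      rw [← Matrix.mulVec_mulVec, ← hz, ← Matrix.mulVec_mulVec, Matrix.mulVec_mulVec _ Qᵀ, hQ,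
        Matrix.one_mulVec]
    have := congrArg Matrix.transpose h1
    rw [Matrix.transpose_mul, hsymm _ (hpsd _ hX₀)] at this
    simpa using this
  have hXQ : ∀ X ∈ 𝒳, X = Q * (Qᵀ * X * Q) * Qᵀ := by
    intro X hX
    have h1 : X * (Q * Qᵀ) = X := by
      refine Matrix.ext_of_mulVec_single fun i => ?_
      have := hker X hX (Pi.single i 1 - (Q * Qᵀ) *ᵥ Pi.single i 1) (by
        rw [Matrix.mulVec_sub, Matrix.mulVec_mulVec, hX₀Q, sub_self])
      rw [Matrix.mulVec_sub, Matrix.mulVec_mulVec, sub_eq_zero] at this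
      exact this.symm
    have h2 : Q * Qᵀ * X = X := by
      have := congrArg Matrix.transpose h1
      rw [Matrix.transpose_mul, hsymm _ (hpsd _ hX)] at this
      simpa using this
    calc X = Q * Qᵀ * X * (Q * Qᵀ) := by rw [h2, h1]
      _ = _ := by simp only [Matrix.mul_assoc]
  set t := (Qᵀ * S * Q).trace with ht
  have htpos : 0 < t := by
    rw [ht, Matrix.trace]
    have : ∀ i : Fin k, 0 < (Qᵀ * S * Q).diag i := by
      intro i
      have h1 := hSpos _ (hQne (Pi.single i 1) (by simp))
      rw [← hquad] at h1
      simpa using h1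
    exact Finset.sum_pos (fun i _ => this i) ⟨⟨0, hk⟩, Finset.mem_univ _⟩
  have hle : ∀ X ∈ 𝒳, lamMin (Qᵀ * X * Q) ≤ τ / t := by
    intro X hX
    rw [le_div_iff₀ htpos]
    have h1 := trace_lower (psd_transpose (hcompr X (hpsd X hX))) (hcompr S hS) _
      (lamMin_lower (hcompr X (hpsd X hX)))
    have h2 : (S * X).trace = (Qᵀ * S * Q * (Qᵀ * X * Q)).trace := by
      conv_lhs => rw [hXQ X hX]
      rw [← Matrix.mul_assoc, Matrix.trace_mul_comm]
      simp only [Matrix.mul_assoc]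
    rw [← h2] at h1
    exact h1.trans (hτ X hX)
  have hub : σ' ≤ τ / t := by
    rw [hσ]
    refine csSup_le ⟨_, X₀, hX₀, rfl⟩ ?_
    rintro _ ⟨X, hX, rfl⟩
    exact hle X hX
  have h0 : 0 < lamMin (Qᵀ * X₀ * Q) := by
    refine lamMin_pos hk fun z hz => ?_
    rw [hquad]
    refine lt_of_le_of_ne (psd_quad (hpsd _ hX₀) _) fun h => ?_
    have h1 := psd_ker (hpsd _ hX₀) h.symm
    have h2 : Q *ᵥ z ∈ LinearMap.range X₀.mulVecLin := by rw [← hrange]; exact ⟨z, rfl⟩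
    obtain ⟨w, hw⟩ := h2
    rw [Matrix.mulVecLin_apply] at hw
    refine (dot_self_pos' (hQne z hz)).ne' ?_
    conv_lhs => rw [← hw]
    conv_lhs => arg 1; rw [← hsymm _ (hpsd _ hX₀)]
    rw [Matrix.mulVec_transpose, ← Matrix.dotProduct_mulVec, hw, h1, dotProduct_zero]
  have hpos : 0 < σ' := by
    refine h0.trans_le ?_
    rw [hσ]
    refine le_csSup ⟨τ / t, ?_⟩ ⟨X₀, hX₀, rfl⟩
    rintro _ ⟨X, hX, rfl⟩
    exact hle X hX
  refine ⟨hpos, ?_⟩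
  rintro _ ⟨z, rfl⟩
  rw [Matrix.mulVecLin_apply, ← hquad, hQQ]
  refine (psd_le_trace (hcompr S hS) z).trans ?_
  refine mul_le_mul_of_nonneg_right ?_ (dot_self_nonneg' z)
  rw [le_div_iff₀ htpos] at hub
  rw [le_div_iff₀ hpos]
  linarith

theorem eig_bounds {n : ℕ} {X S : Matrix (Fin n) (Fin n) ℝ} {μ : ℝ} (hμ : 0 < μ)
    (hX : X.PosSemidef) (hSX : S * X = μ • (1 : Matrix (Fin n) (Fin n) ℝ))
    {φ ψ : Fin n → ℝ} {QX QS : Matrix (Fin n) (Fin n) ℝ} (hφ : Antitone φ) (hψ : Antitone ψ)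
    (hQX : QXᵀ * QX = 1) (hXQ : X * QX = QX * Matrix.diagonal φ)
    (hQS : QSᵀ * QS = 1) (hSQ : S * QS = QS * Matrix.diagonal ψ)
    (U : Submodule ℝ (Fin n → ℝ)) (t : ℝ) (h : ∀ u ∈ U, u ⬝ᵥ S *ᵥ u ≤ t * (u ⬝ᵥ u))
    (i : Fin n) (hi : (i : ℕ) + 1 ≤ Module.finrank ℝ U) :
    ψ ⟨n - 1 - (i : ℕ), by have := i.2; omega⟩ ≤ t ∧ 0 < φ i ∧ μ / φ i ≤ t := by
  have hd : QXᵀ * X * QX = Matrix.diagonal φ := by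
    rw [Matrix.mul_assoc, hXQ, ← Matrix.mul_assoc, hQX, Matrix.one_mul]
  have hφ0 : ∀ k, 0 ≤ φ k := by
    have h1 : (QXᵀ * X * QX).PosSemidef := by simpa using hX.conjTranspose_mul_mul_same QX
    rw [hd] at h1
    exact Matrix.posSemidef_diagonal_iff.1 h1
  have hprod : (QXᵀ * S * QX) * Matrix.diagonal φ = μ • (1 : Matrix (Fin n) (Fin n) ℝ) := by
    rw [Matrix.mul_assoc, ← hXQ, ← Matrix.mul_assoc, Matrix.mul_assoc QXᵀ, hSX]
    simp [hQX]
  have hφne : ∀ k, φ k ≠ 0 := by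
    intro k h0
    have := congrFun (congrFun hprod k) k
    rw [Matrix.mul_diagonal, h0] at this
    simp at this
    exact hμ.ne this
  have hφpos : ∀ k, 0 < φ k := fun k => lt_of_le_of_ne (hφ0 k) (hφne k).symm
  have hS' : S * QX = QX * Matrix.diagonal (fun k => μ / φ k) := by
    have h1 : S * QX * Matrix.diagonal φ = μ • QX := by
      rw [Matrix.mul_assoc, ← hXQ, ← Matrix.mul_assoc, hSX]; simp
    have h2 : Matrix.diagonal φ * Matrix.diagonal (fun k => (φ k)⁻¹) = 1 := by
      rw [Matrix.diagonal_mul_diagonal, ← Matrix.diagonal_one]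
      congr; funext k; exact mul_inv_cancel₀ (hφne k)
    calc S * QX = S * QX * (Matrix.diagonal φ * Matrix.diagonal (fun k => (φ k)⁻¹)) := by
          rw [h2, Matrix.mul_one]
      _ = μ • QX * Matrix.diagonal (fun k => (φ k)⁻¹) := by rw [← Matrix.mul_assoc, h1]
      _ = _ := by
        ext a c
        simp [Matrix.mul_diagonal]; ring
  refine ⟨?_, hφpos i, ?_⟩
  · refine courant hQS hSQ (Finset.Iic ⟨n - 1 - (i : ℕ), by have := i.2; omega⟩) _ t ?_ U ?_ h
    · intro j hj
      exact hψ (Finset.mem_Iic.1 hj)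
    · rw [Fin.card_Iic]; have := i.2; simp only []; omega
  · refine courant hQX hS' (Finset.Ici i) _ t ?_ U ?_ h
    · intro j hj
      have := hφ (Finset.mem_Ici.1 hj)
      exact div_le_div_of_nonneg_left hμ.le (hφpos j) this
    · rw [Fin.card_Ici]; have := i.2; omega

theorem gap {n m : ℕ} {D X S : Matrix (Fin n) (Fin n) ℝ} {A : Fin m → Matrix (Fin n) (Fin n) ℝ}
    {b y : Fin m → ℝ} (hX : ∀ i, ((A i) * X).trace = b i) (hS : (∑ i, y i • A i) + S = D) :
    (D * X).trace = ∑ i, b i * y i + (S * X).trace := by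
  rw [← hS, Matrix.add_mul, Matrix.trace_add, Matrix.sum_mul, Matrix.trace_sum]
  congr 1
  refine Finset.sum_congr rfl fun i _ => ?_
  rw [Matrix.smul_mul, Matrix.trace_smul, hX, smul_eq_mul, mul_comm]

theorem weak_duality {n m : ℕ} {C Cbar X S : Matrix (Fin n) (Fin n) ℝ}
    {A : Fin m → Matrix (Fin n) (Fin n) ℝ} {b y : Fin m → ℝ} (hX : PrimalFeasible A b X)
    (hS : DualFeasible C Cbar A 0 y S) : ∑ i, b i * y i ≤ ((C + (0 : ℝ) • Cbar) * X).trace := by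
  rw [gap hX.2.1 hS.2.1]
  linarith [psd_trace_mul_nonneg hS.2.2 hX.2.2]

theorem primal_ker {n m : ℕ} {C Cbar Xs X : Matrix (Fin n) (Fin n) ℝ}
    {A : Fin m → Matrix (Fin n) (Fin n) ℝ} {b : Fin m → ℝ}
    (h : Xs ∈ intrinsicInterior ℝ (PrimalOpt C Cbar A b 0)) (hX : X ∈ PrimalOpt C Cbar A b 0)
    (v : Fin n → ℝ) (hv : Xs *ᵥ v = 0) : X *ᵥ v = 0 := by
  obtain ⟨η, hη, hmem⟩ := intrinsic_extend h hX
  have h1 := psd_quad hmem.1.2.2 v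
  rw [Matrix.add_mulVec, Matrix.smul_mulVec, Matrix.sub_mulVec, hv] at h1
  have h2 := psd_quad hX.1.2.2 v
  refine psd_ker hX.1.2.2 (le_antisymm ?_ h2)
  simp at h1
  by_contra hc
  push Not at hc
  nlinarith [mul_pos hη hc]

theorem dual_ker {n m : ℕ} {C Cbar Ss S : Matrix (Fin n) (Fin n) ℝ}
    {A : Fin m → Matrix (Fin n) (Fin n) ℝ} {b ys y : Fin m → ℝ}
    (h : (ys, Ss) ∈ intrinsicInterior ℝ (DualOpt C Cbar A b 0)) (hS : (y, S) ∈ DualOpt C Cbar A b 0)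
    (v : Fin n → ℝ) (hv : Ss *ᵥ v = 0) : S *ᵥ v = 0 := by
  obtain ⟨η, hη, hmem⟩ := intrinsic_extend h hS
  have h1 := psd_quad hmem.1.2.2 v
  simp only [Prod.snd_add, Prod.smul_snd, Prod.snd_sub] at h1
  rw [Matrix.add_mulVec, Matrix.smul_mulVec, Matrix.sub_mulVec, hv] at h1
  have h2 := psd_quad hS.1.2.2 v
  refine psd_ker hS.1.2.2 (le_antisymm ?_ h2)
  simp at h1
  by_contra hc
  push Not at hc
  nlinarith [mul_pos hη hc]

theorem central_facts {n m : ℕ} {C Cbar X S : Matrix (Fin n) (Fin n) ℝ}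
    {A : Fin m → Matrix (Fin n) (Fin n) ℝ} {b y : Fin m → ℝ} {μ : ℝ} (hμ : 0 < μ)
    (h : CentralSol C Cbar A b 0 μ X y S) :
    S * X = μ • (1 : Matrix (Fin n) (Fin n) ℝ) ∧ (∀ z, z ≠ 0 → 0 < z ⬝ᵥ S *ᵥ z) ∧
      (∀ z, z ≠ 0 → 0 < z ⬝ᵥ X *ᵥ z) ∧ (S * X).trace = n * μ := by
  obtain ⟨hX, hS, hXS⟩ := h
  have hSX : S * X = μ • (1 : Matrix (Fin n) (Fin n) ℝ) := by
    have := congrArg Matrix.transpose hXS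
    rw [Matrix.transpose_mul, psd_transpose hX.2.2, psd_transpose hS.2.2] at this
    simpa using this
  refine ⟨hSX, ?_, ?_, ?_⟩
  · intro z hz
    refine lt_of_le_of_ne (psd_quad hS.2.2 z) fun h0 => hz ?_
    have h1 := psd_ker hS.2.2 h0.symm
    have h2 : (X * S) *ᵥ z = 0 := by rw [← Matrix.mulVec_mulVec, h1, Matrix.mulVec_zero]
    rw [hXS, Matrix.smul_mulVec, Matrix.one_mulVec] at h2
    exact (smul_eq_zero.1 h2).resolve_left hμ.ne'
  · intro z hz
    refine lt_of_le_of_ne (psd_quad hX.2.2 z) fun h0 => hz ?_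
    have h1 := psd_ker hX.2.2 h0.symm
    have h2 : (S * X) *ᵥ z = 0 := by rw [← Matrix.mulVec_mulVec, h1, Matrix.mulVec_zero]
    rw [hSX, Matrix.smul_mulVec, Matrix.one_mulVec] at h2
    exact (smul_eq_zero.1 h2).resolve_left hμ.ne'
  · rw [hSX]; simp [mul_comm]

theorem sigB_bound {n m nB : ℕ} {C Cbar X S Xs : Matrix (Fin n) (Fin n) ℝ}
    {A : Fin m → Matrix (Fin n) (Fin n) ℝ} {b y : Fin m → ℝ} {μ : ℝ} (hμ : 0 < μ)
    (h : CentralSol C Cbar A b 0 μ X y S)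
    (hXs : Xs ∈ intrinsicInterior ℝ (PrimalOpt C Cbar A b 0)) (hB : 0 < nB)
    (QB : Matrix (Fin n) (Fin nB) ℝ) (hQ : QBᵀ * QB = 1)
    (hr : LinearMap.range QB.mulVecLin = LinearMap.range Xs.mulVecLin) (σB : ℝ)
    (hσB : σB = sSup ((fun X => lamMin (QBᵀ * X * QB)) '' PrimalOpt C Cbar A b 0)) :
    0 < σB ∧ ∀ u ∈ LinearMap.range QB.mulVecLin, u ⬝ᵥ S *ᵥ u ≤ (n * μ) / σB * (u ⬝ᵥ u) := by
  obtain ⟨h1, h2, h3, h4⟩ := central_facts hμ h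
  refine sig_bound hB QB hQ (PrimalOpt C Cbar A b 0) Xs (intrinsicInterior_subset hXs)
    (fun X hX => hX.1.2.2) (fun X hX v hv => primal_ker hXs hX v hv) hr S h.2.1.2.2 h2 _ σB ?_ hσB
  intro X' hX'
  have e1 := gap hX'.1.2.1 h.2.1.2.1
  have e2 := gap h.1.2.1 h.2.1.2.1
  have e3 := hX'.2 X h.1
  linarith

theorem sigN_bound {n m nN : ℕ} {C Cbar X S Ss : Matrix (Fin n) (Fin n) ℝ}
    {A : Fin m → Matrix (Fin n) (Fin n) ℝ} {b y ys : Fin m → ℝ} {μ : ℝ} (hμ : 0 < μ)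
    (h : CentralSol C Cbar A b 0 μ X y S)
    (hSs : (ys, Ss) ∈ intrinsicInterior ℝ (DualOpt C Cbar A b 0)) (hN : 0 < nN)
    (QN : Matrix (Fin n) (Fin nN) ℝ) (hQ : QNᵀ * QN = 1)
    (hr : LinearMap.range QN.mulVecLin = LinearMap.range Ss.mulVecLin) (σN : ℝ)
    (hσN : σN = sSup ((fun p => lamMin (QNᵀ * p.2 * QN)) '' DualOpt C Cbar A b 0)) :
    0 < σN ∧ ∀ u ∈ LinearMap.range QN.mulVecLin, u ⬝ᵥ X *ᵥ u ≤ (n * μ) / σN * (u ⬝ᵥ u) := by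
  obtain ⟨h1, h2, h3, h4⟩ := central_facts hμ h
  refine sig_bound hN QN hQ (Prod.snd '' DualOpt C Cbar A b 0) Ss
    ⟨_, intrinsicInterior_subset hSs, rfl⟩
    ?_ ?_ hr X h.1.2.2 h3 _ σN ?_ (by rw [hσN, Set.image_image])
  · rintro _ ⟨p, hp, rfl⟩
    exact hp.1.2.2
  · rintro _ ⟨⟨y', S'⟩, hp, rfl⟩ v hv
    exact dual_ker hSs hp v hv
  · rintro _ ⟨⟨y', S'⟩, hp, rfl⟩
    have e1 := gap h.1.2.1 hp.1.2.1
    have e2 := gap h.1.2.1 h.2.1.2.1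
    have e3 := hp.2 y S h.2.1
    rw [Matrix.trace_mul_comm]
    simp only at e1 e3 ⊢
    linarith

theorem dual_hmax {n m : ℕ} {C Cbar Ss : Matrix (Fin n) (Fin n) ℝ}
    {A : Fin m → Matrix (Fin n) (Fin n) ℝ} {b ys : Fin m → ℝ}
    (hSs : (ys, Ss) ∈ intrinsicInterior ℝ (DualOpt C Cbar A b 0)) (t : ℝ) (y : Fin m → ℝ)
    (hy : ∑ i, b i * y i = 0) (hp : (t • Ss + ∑ i, y i • A i).PosSemidef) (v : Fin n → ℝ)
    (hv : Ss *ᵥ v = 0) : v ⬝ᵥ (t • Ss + ∑ i, y i • A i) *ᵥ v = 0 := by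
  have hSo := intrinsicInterior_subset hSs
  set T' := t • Ss + ∑ i, y i • A i with hT'
  set η := 1 / (1 + |t|) with hη
  have ht0 : 0 < 1 + |t| := by positivity
  have hη0 : 0 < η := by positivity
  have hpos : 0 < 1 + η * t := by
    have h1 : η * (1 + |t|) = 1 := by rw [hη]; field_simp
    have h2 : η * (t + |t|) ≥ 0 := mul_nonneg hη0.le (by linarith [neg_abs_le t])
    nlinarith
  set a := (1 + η * t)⁻¹ with ha
  have ha0 : 0 < a := by positivity
  have ha1 : a * (1 + η * t) = 1 := inv_mul_cancel₀ hpos.ne'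
  have hS' : (a • (Ss + η • T')).PosSemidef :=
    (hSo.1.2.2.add (hp.smul hη0.le)).smul ha0.le
  have hSe : a • (Ss + η • T') = Ss + (a * η) • ∑ i, y i • A i := by
    rw [hT']
    calc _ = (a * (1 + η * t)) • Ss + (a * η) • ∑ i, y i • A i := by module
      _ = _ := by rw [ha1, one_smul]
  have hopt : (ys - (a * η) • y, a • (Ss + η • T')) ∈ DualOpt C Cbar A b 0 := by
    refine ⟨⟨psd_transpose hS', ?_, hS'⟩, ?_⟩
    · have h1 := hSo.1.2.1
      simp only at h1 ⊢
      rw [← h1, hSe]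
      simp only [Pi.sub_apply, Pi.smul_apply, sub_smul, smul_eq_mul, mul_smul, Finset.sum_sub_distrib,
        Finset.smul_sum]
      abel
    · intro y' S' h'
      have h1 := hSo.2 y' S' h'
      have h2 : ∑ i, b i * (ys - (a * η) • y) i = ∑ i, b i * ys i - (a * η) * ∑ i, b i * y i := by
        rw [Finset.mul_sum, ← Finset.sum_sub_distrib]
        refine Finset.sum_congr rfl fun i _ => ?_
        simp; ring
      simp only at h1 ⊢
      rw [h2, hy]
      simpa using h1
  have h1 := dual_ker hSs hopt v hv
  rw [Matrix.smul_mulVec, Matrix.add_mulVec, hv, zero_add, Matrix.smul_mulVec, smul_smul] at h1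
  have h2 := (smul_eq_zero.1 h1).resolve_left (by positivity)
  rw [h2, dotProduct_zero]

theorem Ss_ne_zero {n m : ℕ} {C Cbar Xs : Matrix (Fin n) (Fin n) ℝ}
    {A : Fin m → Matrix (Fin n) (Fin n) ℝ} {b ys : Fin m → ℝ}
    (hXs : Xs ∈ intrinsicInterior ℝ (PrimalOpt C Cbar A b 0))
    (hSs : (ys, (0 : Matrix (Fin n) (Fin n) ℝ)) ∈ DualOpt C Cbar A b 0)
    {X0 : Matrix (Fin n) (Fin n) ℝ} (hX0 : PrimalFeasible A b X0) (hX0p : X0.PosDef) :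
    Module.finrank ℝ (LinearMap.range Xs.mulVecLin) = n := by
  have hopt : X0 ∈ PrimalOpt C Cbar A b 0 := by
    refine ⟨hX0, fun X' hX' => ?_⟩
    rw [gap hX0.2.1 hSs.1.2.1, gap hX'.2.1 hSs.1.2.1]
    simp
  have hk : LinearMap.ker Xs.mulVecLin = ⊥ := by
    rw [LinearMap.ker_eq_bot']
    intro v hv
    by_contra h0
    have h1 := primal_ker hXs hopt v (by simpa using hv)
    have h2 := hX0p.dotProduct_mulVec_pos h0
    rw [h1] at h2
    simp at h2
  have := LinearMap.finrank_range_add_finrank_ker Xs.mulVecLin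
  rw [hk] at this
  simpa using this

theorem central_rate {n m : ℕ} (C Cbar : Matrix (Fin n) (Fin n) ℝ)
    (A : Fin m → Matrix (Fin n) (Fin n) ℝ) (b : Fin m → ℝ)
    (hSA : StandingAssumptions C Cbar A b) (Ss : Matrix (Fin n) (Fin n) ℝ) (ys : Fin m → ℝ)
    (hSs : (ys, Ss) ∈ intrinsicInterior ℝ (DualOpt C Cbar A b 0)) (hSs0 : Ss ≠ 0) (hn : 0 < n) :
    ∃ K : ℝ, 0 < K ∧ ∀ μ X y S, 0 < μ → μ ≤ 1 → CentralSol C Cbar A b 0 μ X y S →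
      ∀ v, Ss *ᵥ v = 0 → v ⬝ᵥ S *ᵥ v ≤ K * μ ^ ((2 : ℝ) ^ ((1 : ℝ) - n)) * (v ⬝ᵥ v) := by
  obtain ⟨-, -, hA, -, X0, -, -, hX0, hX0p, -, -⟩ := hSA
  have hSo := intrinsicInterior_subset hSs
  set T : Set (ℝ × Matrix (Fin n) (Fin n) ℝ) :=
    {p | 0 < p.1 ∧ p.1 ≤ 1 ∧ ∃ X y, CentralSol C Cbar A b 0 p.1 X y p.2} with hTdef
  have hgap : ∀ μ X y S, 0 < μ → CentralSol C Cbar A b 0 μ X y S →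
      ∑ i, b i * y i ≤ ∑ i, b i * ys i ∧ ∑ i, b i * ys i ≤ ∑ i, b i * y i + n * μ := by
    intro μ X y S hμ h
    refine ⟨hSo.2 y S h.2.1, ?_⟩
    have h1 := weak_duality h.1 hSo.1
    rw [gap h.1.2.1 h.2.1.2.1, (central_facts hμ h).2.2.2] at h1
    exact h1
  have hT : ∀ p ∈ T, 0 < p.1 ∧ p.1 ≤ 1 ∧ p.2.PosSemidef ∧
      ∃ y : Fin m → ℝ, p.2 = Ss + ∑ i, y i • A i ∧ |∑ i, b i * y i| ≤ n * p.1 := by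
    rintro ⟨μ, S⟩ ⟨hμ, hμ1, X, y, h⟩
    refine ⟨hμ, hμ1, h.2.1.2.2, ys - y, ?_, ?_⟩
    · have h1 := hSo.1.2.1
      have h2 := h.2.1.2.1
      rw [← h2] at h1
      simp only at h1 ⊢
      simp only [Pi.sub_apply, sub_smul, Finset.sum_sub_distrib]
      rw [eq_comm, ← sub_eq_zero, ← sub_eq_zero.2 h1]
      abel
    · obtain ⟨h1, h2⟩ := hgap μ X y S hμ h
      have h3 : ∑ i, b i * (ys - y) i = ∑ i, b i * ys i - ∑ i, b i * y i := by
        rw [← Finset.sum_sub_distrib]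
        exact Finset.sum_congr rfl fun i _ => by simp; ring
      rw [h3, abs_le]
      simp only
      have : 0 ≤ n * μ := by positivity
      constructor <;> linarith
  obtain ⟨ε, hε, hlow⟩ := pd_lower (M := X0) (fun z hz => by
    simpa using hX0p.dotProduct_mulVec_pos hz)
  have hbd : ∀ j, Asymptotics.IsBigO (Filter.principal T) (fun p => p.2 j j) (fun _ => (1:ℝ)) := by
    intro j
    refine Asymptotics.isBigO_principal.2
      ⟨(((C + (0 : ℝ) • Cbar) * X0).trace - ∑ i, b i * ys i + n) / ε, ?_⟩
    rintro ⟨μ, S⟩ ⟨hμ, hμ1, X, y, h⟩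
    simp only at hμ hμ1 h ⊢
    have hd : ∀ i, 0 ≤ S i i := fun i => by
      simpa using psd_quad h.2.1.2.2 (Pi.single i 1)
    have h1 : S j j ≤ S.trace :=
      Finset.single_le_sum (f := fun i => S i i) (fun i _ => hd i) (Finset.mem_univ j)
    have h2 := trace_lower (psd_transpose hX0.2.2) h.2.1.2.2 ε hlow
    have h3 := gap hX0.2.1 h.2.1.2.1
    have h4 := (hgap μ X y S hμ h).2
    have h5 : (n : ℝ) * μ ≤ n := mul_le_of_le_one_right (by positivity) hμ1
    rw [Real.norm_eq_abs, abs_of_nonneg (hd j)]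
    simp only [norm_one, mul_one]
    rw [le_div_iff₀ hε]
    nlinarith
  obtain ⟨P', hP's, hP'k, hO⟩ := facial_iter Ss A b hA hSo.1.2.2 hSs0 (dual_hmax hSs) T hT hbd (n - 1)
    1 1 le_rfl one_pos (by simp) (by simp) (by simp) (by rw [Matrix.rank_one]; simp; omega)
    (by intro i k; simp [Asymptotics.isBigO_zero])
  have hγ : (1 : ℝ) / 2 ^ (n - 1) = (2 : ℝ) ^ ((1 : ℝ) - n) := by
    rw [show (1 : ℝ) - n = -((n - 1 : ℕ) : ℝ) by push_cast [Nat.cast_sub (show 1 ≤ n from hn)]; ring,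
      Real.rpow_neg (by norm_num), Real.rpow_natCast, one_div]
  rw [hγ] at hO
  have hO' := fun i k => Asymptotics.isBigO_principal.1 (hO i k)
  choose Kf hKf using hO'
  set K := ∑ i, ∑ k, |Kf i k| + 1 with hK
  have hK1 : ∀ i k, Kf i k ≤ K := by
    intro i k
    have h1 : |Kf i k| ≤ ∑ k, |Kf i k| :=
      Finset.single_le_sum (f := fun k => |Kf i k|) (fun _ _ => abs_nonneg _) (Finset.mem_univ k)
    have h2 : ∑ k, |Kf i k| ≤ ∑ i, ∑ k, |Kf i k| :=
      Finset.single_le_sum (f := fun i => ∑ k, |Kf i k|)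
        (fun _ _ => Finset.sum_nonneg fun _ _ => abs_nonneg _) (Finset.mem_univ i)
    linarith [le_abs_self (Kf i k)]
  have hK0 : 0 < K := by positivity
  refine ⟨K * n, by positivity, fun μ X y S hμ hμ1 h v hv => ?_⟩
  have hmem : ((μ, S) : ℝ × Matrix (Fin n) (Fin n) ℝ) ∈ T := ⟨hμ, hμ1, X, y, h⟩
  set γ := (2 : ℝ) ^ ((1 : ℝ) - n) with hγd
  have hμγ : 0 < μ ^ γ := Real.rpow_pos_of_pos hμ _
  have hE := quad_bound (E := S - P' * S * P') (η := K * μ ^ γ) (by positivity) (by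
    intro i k
    have h1 := hKf i k _ hmem
    rw [Real.norm_eq_abs, Real.norm_eq_abs] at h1
    simp only at h1
    rw [abs_of_pos hμγ] at h1
    exact h1.trans (mul_le_mul_of_nonneg_right (hK1 i k) hμγ.le)) v
  rw [Matrix.sub_mulVec, ← Matrix.mulVec_mulVec, hP'k v hv, Matrix.mulVec_zero, sub_zero] at hE
  calc _ ≤ _ := le_abs_self _
    _ ≤ _ := hE
    _ = _ := by ring

/-- eigenvalue bounds along the central path identifying the optimal partition
(Theorem 3.8 of Mohammad-Nezhad and Terlaky). -/
theorem stmt15 {n m : ℕ} (C Cbar : Matrix (Fin n) (Fin n) ℝ)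
    (A : Fin m → Matrix (Fin n) (Fin n) ℝ) (b : Fin m → ℝ)
    (hSA : StandingAssumptions C Cbar A b)
    (Xs Ss : Matrix (Fin n) (Fin n) ℝ) (ys : Fin m → ℝ)
    (hmc : MaxComp C Cbar A b 0 Xs ys Ss)
    (nB nT nN : ℕ)
    (hnB : nB = Module.finrank ℝ (LinearMap.range Xs.mulVecLin))
    (hnN : nN = Module.finrank ℝ (LinearMap.range Ss.mulVecLin))
    (hnT : nB + nT + nN = n)
    (QB : Matrix (Fin n) (Fin nB) ℝ) (QN : Matrix (Fin n) (Fin nN) ℝ)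
    (hQBorth : QBᵀ * QB = 1)
    (hQBrange : LinearMap.range QB.mulVecLin = LinearMap.range Xs.mulVecLin)
    (hQNorth : QNᵀ * QN = 1)
    (hQNrange : LinearMap.range QN.mulVecLin = LinearMap.range Ss.mulVecLin)
    (σB σN σ : ℝ)
    (hσB : σB = sSup ((fun X => lamMin (QBᵀ * X * QB)) '' PrimalOpt C Cbar A b 0))
    (hσN : σN = sSup ((fun p => lamMin (QNᵀ * p.2 * QN)) '' DualOpt C Cbar A b 0))
    (hσ : σ = if nB = 0 then σN else if nN = 0 then σB else min σB σN) :
    ∃ (μhat c γ : ℝ), 0 < μhat ∧ 0 < c ∧ (2 : ℝ) ^ ((1 : ℝ) - (n : ℝ)) ≤ γ ∧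
      ∀ μ : ℝ, 0 < μ → μ ≤ μhat →
        ∀ (Xμ Sμ : Matrix (Fin n) (Fin n) ℝ) (yμ : Fin m → ℝ),
          CentralSol C Cbar A b 0 μ Xμ yμ Sμ →
          ∀ (φ ψ : Fin n → ℝ) (QX QS : Matrix (Fin n) (Fin n) ℝ),
            Antitone φ → Antitone ψ →
            QXᵀ * QX = 1 → Xμ * QX = QX * Matrix.diagonal φ →
            QSᵀ * QS = 1 → Sμ * QS = QS * Matrix.diagonal ψ →
            (∀ i : Fin n, (i : ℕ) < nB →
              ψ ⟨n - 1 - (i : ℕ), by have := i.2; omega⟩ ≤ (n : ℝ) * μ / σ ∧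
                σ / (n : ℝ) ≤ φ i) ∧
            (∀ i : Fin n, (i : ℕ) < nN →
              φ ⟨n - 1 - (i : ℕ), by have := i.2; omega⟩ ≤ (n : ℝ) * μ / σ ∧
                σ / (n : ℝ) ≤ ψ i) ∧
            (∀ i : Fin n, nB ≤ (i : ℕ) → (i : ℕ) < nB + nT →
              μ / (c * Real.sqrt (n : ℝ) * ((n : ℝ) * μ) ^ γ) ≤ φ i ∧
                ψ ⟨n - 1 - (i : ℕ), by have := i.2; omega⟩ ≤
                  c * Real.sqrt (n : ℝ) * ((n : ℝ) * μ) ^ γ) := by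
  obtain ⟨hXs, hSs⟩ := hmc
  have hSo := intrinsicInterior_subset hSs
  have key : ∃ c : ℝ, 0 < c ∧ (nT ≠ 0 → ∀ μ X y S, 0 < μ → μ ≤ 1 → CentralSol C Cbar A b 0 μ X y S →
      ∀ v ∈ LinearMap.ker Ss.mulVecLin, v ⬝ᵥ S *ᵥ v ≤
        c * Real.sqrt (n : ℝ) * ((n : ℝ) * μ) ^ ((2 : ℝ) ^ ((1 : ℝ) - (n : ℝ))) * (v ⬝ᵥ v)) := by
    by_cases hnT0 : nT = 0
    · exact ⟨1, one_pos, fun h => absurd hnT0 h⟩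
    have hn : 0 < n := by omega
    have hSs0 : Ss ≠ 0 := by
      rintro rfl
      obtain ⟨-, -, -, -, X0, -, -, hX0, hX0p, -, -⟩ := hSA
      have := Ss_ne_zero hXs hSo hX0 hX0p
      omega
    obtain ⟨K, hK, hb⟩ := central_rate C Cbar A b hSA Ss ys hSs hSs0 hn
    refine ⟨K, hK, fun _ μ X y S hμ hμ1 h v hv => ?_⟩
    refine (hb μ X y S hμ hμ1 h v (by simpa using hv)).trans ?_
    refine mul_le_mul_of_nonneg_right ?_ (dot_self_nonneg' v)
    have hn1 : (1 : ℝ) ≤ n := by exact_mod_cast hn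
    have h1 : 1 ≤ Real.sqrt n := Real.one_le_sqrt.2 hn1
    have h2 : μ ^ ((2 : ℝ) ^ ((1 : ℝ) - (n : ℝ))) ≤ ((n : ℝ) * μ) ^ ((2 : ℝ) ^ ((1 : ℝ) - (n : ℝ))) :=
      Real.rpow_le_rpow hμ.le (le_mul_of_one_le_left hμ.le hn1) (by positivity)
    have h3 : 0 ≤ μ ^ ((2 : ℝ) ^ ((1 : ℝ) - (n : ℝ))) := by positivity
    calc _ ≤ K * 1 * ((n : ℝ) * μ) ^ ((2 : ℝ) ^ ((1 : ℝ) - (n : ℝ))) := by rw [mul_one]; gcongr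
      _ ≤ _ := by gcongr
  obtain ⟨c, hc, hrate⟩ := key
  refine ⟨1, c, _, one_pos, hc, le_rfl, ?_⟩
  intro μ hμ hμ1 Xμ Sμ yμ hcs φ ψ QX QS hφ hψ hQX hXQ hQS hSQ
  obtain ⟨hSX, hSpos, hXpos, htr⟩ := central_facts hμ hcs
  have hXp := hcs.1.2.2
  have hSp := hcs.2.1.2.2
  have hconv : ∀ {s x : ℝ}, 0 < n → 0 < s → 0 < x → μ / x ≤ n * μ / s → s / n ≤ x := by
    intro s x hn hs hx h
    have hn1 : (0 : ℝ) < n := by exact_mod_cast hn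
    rw [div_le_div_iff₀ hx hs] at h
    rw [div_le_iff₀ hn1]
    have h' : μ * s ≤ μ * (x * n) := by linarith
    exact le_of_mul_le_mul_left h' hμ
  have hσBf : nB ≠ 0 → 0 < σ ∧ σ ≤ σB := by
    intro h0
    have h1 := (sigB_bound hμ hcs hXs (Nat.pos_of_ne_zero h0) QB hQBorth hQBrange σB hσB).1
    rw [if_neg h0] at hσ
    by_cases h2 : nN = 0
    · rw [if_pos h2] at hσ; rw [hσ]; exact ⟨h1, le_rfl⟩
    · have h3 := (sigN_bound hμ hcs hSs (Nat.pos_of_ne_zero h2) QN hQNorth hQNrange σN hσN).1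
      rw [if_neg h2] at hσ; rw [hσ]; exact ⟨lt_min h1 h3, min_le_left _ _⟩
  have hσNf : nN ≠ 0 → 0 < σ ∧ σ ≤ σN := by
    intro h0
    have h1 := (sigN_bound hμ hcs hSs (Nat.pos_of_ne_zero h0) QN hQNorth hQNrange σN hσN).1
    by_cases h2 : nB = 0
    · rw [if_pos h2] at hσ; rw [hσ]; exact ⟨h1, le_rfl⟩
    · have h3 := (sigB_bound hμ hcs hXs (Nat.pos_of_ne_zero h2) QB hQBorth hQBrange σB hσB).1
      rw [if_neg h2, if_neg h0] at hσ; rw [hσ]; exact ⟨lt_min h3 h1, min_le_right _ _⟩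
  have hmono : ∀ {s : ℝ}, 0 < σ → σ ≤ s → (n : ℝ) * μ / s ≤ n * μ / σ := by
    intro s h1 h2
    exact div_le_div_of_nonneg_left (by positivity) h1 h2
  refine ⟨?_, ?_, ?_⟩
  · intro i hi
    have h0 : nB ≠ 0 := by omega
    obtain ⟨hσ0, hσ1⟩ := hσBf h0
    have hb := (sigB_bound hμ hcs hXs (Nat.pos_of_ne_zero h0) QB hQBorth hQBrange σB hσB).2
    obtain ⟨g1, g2, g3⟩ := eig_bounds hμ hXp hSX hφ hψ hQX hXQ hQS hSQ
      (LinearMap.range QB.mulVecLin) (n * μ / σ)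
      (fun u hu => (hb u hu).trans
        (mul_le_mul_of_nonneg_right (hmono hσ0 hσ1) (dot_self_nonneg' u))) i
      (by rw [hQBrange, ← hnB]; omega)
    exact ⟨g1, hconv (by have := i.2; omega) hσ0 g2 g3⟩
  · intro i hi
    have h0 : nN ≠ 0 := by omega
    obtain ⟨hσ0, hσ1⟩ := hσNf h0
    have hb := (sigN_bound hμ hcs hSs (Nat.pos_of_ne_zero h0) QN hQNorth hQNrange σN hσN).2
    obtain ⟨g1, g2, g3⟩ := eig_bounds hμ hSp hcs.2.2 hψ hφ hQS hSQ hQX hXQ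
      (LinearMap.range QN.mulVecLin) (n * μ / σ)
      (fun u hu => (hb u hu).trans
        (mul_le_mul_of_nonneg_right (hmono hσ0 hσ1) (dot_self_nonneg' u))) i
      (by rw [hQNrange, ← hnN]; omega)
    exact ⟨g1, hconv (by have := i.2; omega) hσ0 g2 g3⟩
  · intro i hi1 hi2
    have hT0 : nT ≠ 0 := by omega
    have hn0 : (0 : ℝ) < n := by
      have := i.2
      exact_mod_cast (show 0 < n by omega)
    obtain ⟨g1, g2, g3⟩ := eig_bounds hμ hXp hSX hφ hψ hQX hXQ hQS hSQ
      (LinearMap.ker Ss.mulVecLin) _ (hrate hT0 μ Xμ yμ Sμ hμ hμ1 hcs) i (by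
        have := LinearMap.finrank_range_add_finrank_ker Ss.mulVecLin
        rw [← hnN] at this
        simp only [Module.finrank_fintype_fun_eq_card, Fintype.card_fin] at this
        omega)
    refine ⟨?_, g1⟩
    have ht : 0 < c * Real.sqrt (n : ℝ) * ((n : ℝ) * μ) ^ ((2 : ℝ) ^ ((1 : ℝ) - (n : ℝ))) := by
      positivity
    rw [div_le_iff₀ g2] at g3
    rw [div_le_iff₀ ht]
    linarith
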